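/- arXiv:2401.05859 — 11 statements merged into one kernel-verified Lean document; each statement's English description precedes it below -/
import Mathlib

section
/- Let n ≥ 1 and let c, c' ∈ {0,1}^n be binary strings. If VT(c) ≡ VT(c') (mod n+1) and there exists a common string y of length n−1 that is a subsequence of both c and c', then c = c'. (Equivalently, any binary string of length n can be uniquely recovered from its VT syndrome modulo n+1 together with any one of its subsequences of length n−1.) -/
/-!
If `y` arises from both `c` and `c'` by one deletion, then, after possibly exchanging `c` and `c'`,
`c = A ++ a :: M ++ B` and `c' = A ++ M ++ b :: B`: one symbol is
inserted before the block `M` or one after it. With `p = |A|`, `k = |M|` and `w` the weight of `M`,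
the VT sums differ by `a (p + 1) + w - b (p + k + 1)`, whose absolute value is at most `n`.
Congruence modulo `n + 1` therefore forces this difference to be `0`. That is impossible for
`a ≠ b`. For `a = b` it says `w = a k`, so `M` is constant equal to `a` and the words coincide.
-/

/-- The (unreduced) VT weight of a string `c = (c_1, …, c_n)`:
`Σ_{i=1}^n i·c_i`, with 1-indexed positions. -/
def vtSum (c : List ℕ) : ℕ := ∑ i ∈ Finset.range c.length, (i + 1) * c.getD i 0

theorem vtSum_cons (a : ℕ) (l : List ℕ) : vtSum (a :: l) = a + vtSum l + l.sum := by
  have hs : l.sum = ∑ i ∈ Finset.range l.length, l.getD i 0 := by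
    induction l with
    | nil => simp
    | cons b l ih => simp [Finset.sum_range_succ', ih, add_comm]
  rw [hs]
  simp only [vtSum, List.length_cons, Finset.sum_range_succ', List.getD_cons_succ,
    List.getD_cons_zero]
  simp only [add_mul, one_mul, Finset.sum_add_distrib]
  omega

theorem vtSum_append (A B : List ℕ) :
    vtSum (A ++ B) = vtSum A + vtSum B + A.length * B.sum := by
  induction A with
  | nil => simp [vtSum]
  | cons a A ih =>
    simp only [List.cons_append, vtSum_cons, ih, List.sum_append, List.length_cons]
    ring

theorem exists_insertion_of_sublist {y c : List ℕ} (h : y.Sublist c)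
    (hl : c.length = y.length + 1) : ∃ A a B, c = A ++ a :: B ∧ y = A ++ B := by
  induction h with
  | slnil => simp at hl
  | @cons l₁ l₂ a h _ =>
    have := h.eq_of_length (by simpa using hl.symm)
    exact ⟨[], a, l₂, by simp, by simpa using this⟩
  | @cons_cons l₁ l₂ a h ih =>
    obtain ⟨A, b, B, rfl, rfl⟩ := ih (by simpa using hl)
    exact ⟨a :: A, b, B, by simp, by simp⟩

theorem sum_le_length_of_binary (M : List ℕ) (h : ∀ x ∈ M, x < 2) : M.sum ≤ M.length := by
  induction M with
  | nil => simp
  | cons x M ih =>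
    have h1 := ih (fun y hy => h y (by simp [hy]))
    have h2 := h x (by simp)
    simp only [List.sum_cons, List.length_cons]
    omega

theorem eq_replicate_zero_of_sum (M : List ℕ) (h : M.sum = 0) :
    M = List.replicate M.length 0 :=
  List.eq_replicate_iff.2 ⟨rfl, fun _ hb => List.sum_eq_zero_iff.1 h _ hb⟩

theorem eq_replicate_one_of_sum (M : List ℕ) (h : ∀ x ∈ M, x < 2) (hs : M.sum = M.length) :
    M = List.replicate M.length 1 := by
  induction M with
  | nil => simp
  | cons x M ih =>
    have h1 := sum_le_length_of_binary M (fun y hy => h y (by simp [hy]))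
    have h2 := h x (by simp)
    simp only [List.sum_cons, List.length_cons] at hs
    obtain rfl : x = 1 := by omega
    simp only [List.length_cons, List.replicate_succ]
    rw [← ih (fun y hy => h y (by simp [hy])) (by omega)]

theorem cons_eq_append_singleton_of_replicate (a : ℕ) (M : List ℕ)
    (h : M = List.replicate M.length a) : a :: M = M ++ [a] := by
  rw [h, ← List.replicate_succ, ← List.replicate_succ']

/-- Two words of length `n` obtained from `A ++ M ++ B` by inserting `a` before `M`, respectively
`b` after `M`, coincide as soon as their VT sums agree modulo `n + 1`. -/
theorem eq_of_vtSum_modEq (A M B : List ℕ) (a b n : ℕ)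
    (hn : (A ++ a :: (M ++ B)).length = n) (ha : a < 2) (hb : b < 2) (hM : ∀ x ∈ M, x < 2)
    (hvt : vtSum (A ++ a :: (M ++ B)) ≡ vtSum (A ++ (M ++ b :: B)) [MOD (n + 1)]) :
    A ++ a :: (M ++ B) = A ++ (M ++ b :: B) := by
  have hw := sum_le_length_of_binary M hM
  simp only [List.length_append, List.length_cons] at hn
  -- After cancelling the common part of the VT sums, both sides are at most `n`,
  -- so their congruence is an equality.
  have key : a * (A.length + 1) + M.sum = b * (A.length + M.length + 1) := by
    have hcancel : a * (A.length + 1) + M.sum ≡ b * (A.length + M.length + 1) [MOD (n + 1)] := by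
      apply Nat.ModEq.add_right_cancel' (vtSum A + vtSum M + vtSum B + B.sum
        + M.length * B.sum + A.length * (M.sum + B.sum))
      convert hvt using 1 <;>
        simp only [vtSum_append, vtSum_cons, List.sum_append, List.sum_cons] <;> ring
    have hlt : ∀ k < n + 1, ∀ l < n + 1, k ≡ l [MOD (n + 1)] → k = l :=
      fun k hk l hl h => Nat.ModEq.eq_of_lt_of_lt h hk hl
    interval_cases a <;> interval_cases b <;> exact hlt _ (by omega) _ (by omega) hcancel
  have hswap : a :: M = M ++ [b] := by
    interval_cases a <;> interval_cases b
    · exact cons_eq_append_singleton_of_replicate 0 M (eq_replicate_zero_of_sum M (by omega))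
    · omega
    · omega
    · exact cons_eq_append_singleton_of_replicate 1 M (eq_replicate_one_of_sum M hM (by omega))
  rw [← List.cons_append, hswap]
  simp

/-- if two binary strings `c, c'` of length `n ≥ 1` have the same
VT syndrome modulo `n+1` and share a common subsequence of length `n-1`,
then `c = c'`. -/
theorem vt_code_corrects_single_deletion
    (n : ℕ) (hn : 1 ≤ n) (c c' : List ℕ)
    (hc : c.length = n) (hc' : c'.length = n)
    (hbin : ∀ a ∈ c, a < 2) (hbin' : ∀ a ∈ c', a < 2)
    (hvt : vtSum c % (n + 1) = vtSum c' % (n + 1))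
    (hy : ∃ y : List ℕ, y.length = n - 1 ∧ y.Sublist c ∧ y.Sublist c') :
    c = c' := by
  obtain ⟨y, hyl, h, h'⟩ := hy
  obtain ⟨A, a, B, rfl, rfl⟩ := exists_insertion_of_sublist h (by omega)
  obtain ⟨A', b, B', rfl, hAB⟩ := exists_insertion_of_sublist h' (by omega)
  have ha : a < 2 := hbin a (by simp)
  have hb : b < 2 := hbin' b (by simp)
  rcases List.append_eq_append_iff.1 hAB with ⟨M, rfl, rfl⟩ | ⟨M, rfl, rfl⟩
  · rw [List.append_assoc] at hvt ⊢
    exact eq_of_vtSum_modEq A M B' a b n hc ha hb (fun x hx => hbin x (by simp [hx])) hvt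
  · rw [List.append_assoc] at hvt ⊢
    exact (eq_of_vtSum_modEq A' M B b a n hc' hb ha
      (fun x hx => hbin' x (by simp [hx])) hvt.symm).symm
end

section
/- Let q > 2, n ≥ 2, and x, x' ∈ Σ_q^n. If VT(φ(x)_{[2,n]}) ≡ VT(φ(x')_{[2,n]}) (mod n), Sum(x) = Sum(x'), and there exists a common string y of length n−1 that is a subsequence of both x and x', then x = x'. (Equivalently, any x ∈ Σ_q^n can be uniquely recovered from VT(φ(x)_{[2,n]}), Sum(x), and any one of its subsequences of length n−1.) -/
/-- For `x ∈ Σ_q^n`, this is `φ(x)_{[2,n]}`, i.e. the binary string of length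
`n-1` whose `i`-th entry is `1` iff `x_{i+1} ≥ x_i`.  (The full signature
`φ(x)` is obtained by prepending a `0`, which carries no information.) -/
def phiTail (x : List ℕ) : List ℕ :=
  List.zipWith (fun a b => if a ≤ b then 1 else 0) x x.tail

/-! ### Words with a common single-deletion subsequence -/

theorem exists_insertion {α : Type*} {y x : List α} (h : y.Sublist x) :
    x.length = y.length + 1 → ∃ u v a, y = u ++ v ∧ x = u ++ a :: v := by
  induction h with
  | slnil => simp
  | @cons y x a h _ =>
    intro hl
    have : y = x := h.eq_of_length (by simp at hl; omega)
    exact ⟨[], x, a, by simp [this], by simp⟩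
  | @cons_cons y x a h ih =>
    intro hl
    obtain ⟨u, v, b, rfl, rfl⟩ := ih (by simpa using hl)
    exact ⟨a :: u, v, b, by simp, by simp⟩

/-- Two words with a common single-deletion subsequence differ by moving the inserted symbol across a
factor `s` (and possibly changing it); the disjunction records on which side of `s` it stands. -/
theorem two_insertions {α : Type*} {y x x' : List α} (h : y.Sublist x) (h' : y.Sublist x')
    (hl : x.length = y.length + 1) (hl' : x'.length = y.length + 1) :
    ∃ u s t a b, (x = u ++ a :: (s ++ t) ∧ x' = u ++ (s ++ b :: t)) ∨
      (x' = u ++ a :: (s ++ t) ∧ x = u ++ (s ++ b :: t)) := by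
  obtain ⟨u, v, a, rfl, rfl⟩ := exists_insertion h hl
  obtain ⟨u', v', b, he, rfl⟩ := exists_insertion h' hl'
  rcases List.append_eq_append_iff.1 he with ⟨s, rfl, rfl⟩ | ⟨s, rfl, rfl⟩
  · exact ⟨u, s, v', a, b, Or.inl ⟨rfl, by simp⟩⟩
  · exact ⟨u', s, v, b, a, Or.inr ⟨rfl, by simp⟩⟩

/-! ### The binary Varshamov–Tenengolts code -/

theorem vtSum_cons_s1 (b : ℕ) (c : List ℕ) : vtSum (b :: c) = b + vtSum c + c.sum := by
  have hs : c.sum = ∑ i ∈ Finset.range c.length, c.getD i 0 := by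
    induction c with
    | nil => simp
    | cons a c ih => simp [Finset.sum_range_succ', ih, add_comm]
  rw [hs]
  simp only [vtSum, List.length_cons, Finset.sum_range_succ', List.getD_cons_succ,
    List.getD_cons_zero]
  rw [add_assoc, ← Finset.sum_add_distrib, add_comm]
  congr 1
  · ring
  · exact Finset.sum_congr rfl fun i _ => by ring

theorem vtSum_append_s1 (c d : List ℕ) :
    vtSum (c ++ d) = vtSum c + vtSum d + c.length * d.sum := by
  induction c with
  | nil => simp [vtSum]
  | cons a c ih => simp only [List.cons_append, vtSum_cons_s1, ih, List.sum_append,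
      List.length_cons]; ring

theorem bits_sum {s : List ℕ} (h : ∀ b ∈ s, b ≤ 1) :
    s.sum ≤ s.length ∧ (s.sum = 0 → 0 :: s = s ++ [0]) ∧
      (s.sum = s.length → 1 :: s = s ++ [1]) := by
  induction s with
  | nil => simp
  | cons a s ih =>
    obtain ⟨h1, h2, h3⟩ := ih fun b hb => h b (by simp [hb])
    have ha := h a (by simp)
    simp only [List.sum_cons, List.length_cons, List.cons_append]
    refine ⟨by omega, fun h0 => ?_, fun h0 => ?_⟩
    · obtain rfl : a = 0 := by omega
      rw [h2 (by omega)]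
    · obtain rfl : a = 1 := by omega
      rw [h3 (by omega)]

/-- Two bit strings `u a s t` and `u s b t` of length `m` with VT weights congruent modulo `m + 1`
are equal: the difference of the weights has absolute value at most `m`, hence vanishes. -/
theorem binary_vt_aux {u s t : List ℕ} {a b m : ℕ} (ha : a ≤ 1) (hb : b ≤ 1)
    (hs : ∀ c ∈ s, c ≤ 1) (hm : u.length + s.length + t.length + 1 = m)
    (h : vtSum (u ++ a :: (s ++ t)) ≡ vtSum (u ++ (s ++ b :: t)) [MOD (m + 1)]) :
    u ++ a :: (s ++ t) = u ++ (s ++ b :: t) := by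
  obtain ⟨h1, h2, h3⟩ := bits_sum hs
  -- Cancel the contributions common to both weights.
  have key : a * (u.length + 1) + s.sum ≡ b * (u.length + s.length + 1) [MOD (m + 1)] := by
    apply Nat.ModEq.add_right_cancel'
      (vtSum u + vtSum s + vtSum t + (s.length + u.length + 1) * t.sum + u.length * s.sum)
    convert h using 1
    · simp only [vtSum_append_s1, vtSum_cons_s1, List.sum_append, List.sum_cons]; ring
    · simp only [vtSum_append_s1, vtSum_cons_s1, List.sum_append, List.sum_cons]; ring
  have key' : a * (u.length + 1) + s.sum = b * (u.length + s.length + 1) := by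
    apply Nat.ModEq.eq_of_lt_of_lt key
    · nlinarith
    · nlinarith
  have hst : a = b ∧ a :: s = s ++ [a] := by
    interval_cases a <;> interval_cases b
    · exact ⟨rfl, h2 (by omega)⟩
    · omega
    · omega
    · exact ⟨rfl, h3 (by omega)⟩
  obtain ⟨rfl, hst⟩ := hst
  rw [← List.cons_append, hst]
  simp

theorem binary_vt {c c' d : List ℕ} {m : ℕ} (hc : ∀ b ∈ c, b ≤ 1) (hc' : ∀ b ∈ c', b ≤ 1)
    (hl : c.length = m) (hl' : c'.length = m) (hd : d.length + 1 = m)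
    (h : d.Sublist c) (h' : d.Sublist c') (hvt : vtSum c ≡ vtSum c' [MOD (m + 1)]) : c = c' := by
  obtain ⟨u, s, t, a, b, ⟨rfl, rfl⟩ | ⟨rfl, rfl⟩⟩ :=
    two_insertions h h' (by omega) (by omega)
  · exact binary_vt_aux (hc a (by simp)) (hc' b (by simp)) (fun e he => hc e (by simp [he]))
      (by simp at hl; omega) hvt
  · exact (binary_vt_aux (hc' a (by simp)) (hc b (by simp)) (fun e he => hc e (by simp [he]))
      (by simp at hl; omega) hvt.symm).symm

/-! ### Signatures -/

theorem phiTail_cons_cons (a b : ℕ) (x : List ℕ) :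
    phiTail (a :: b :: x) = (if a ≤ b then 1 else 0) :: phiTail (b :: x) := rfl

theorem phiTail_length (x : List ℕ) : (phiTail x).length = x.length - 1 := by
  simp [phiTail]

theorem phiTail_le_one (x : List ℕ) : ∀ b ∈ phiTail x, b ≤ 1 := by
  induction x with
  | nil => simp [phiTail]
  | cons a x ih =>
    cases x with
    | nil => simp [phiTail]
    | cons b x =>
      rw [phiTail_cons_cons]
      intro c hc
      rcases List.mem_cons.1 hc with rfl | hc
      · split_ifs <;> simp
      · exact ih c hc

theorem phiTail_sublist (u v : List ℕ) (a : ℕ) :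
    (phiTail (u ++ v)).Sublist (phiTail (u ++ a :: v)) := by
  induction u with
  | nil =>
    cases v with
    | nil => simp [phiTail]
    | cons r w => exact List.sublist_cons_self _ _
  | cons p u ih =>
    cases u with
    | nil =>
      cases v with
      | nil => simp [phiTail]
      | cons r w =>
        simp only [List.cons_append, List.nil_append, phiTail_cons_cons]
        -- The bit of `p ≤ r` is always one of the bits of `p ≤ a` and `a ≤ r`.
        by_cases h : (p ≤ r ↔ p ≤ a)
        · simp only [h]
          exact (List.sublist_cons_self _ _).cons_cons _
        · have h' : (p ≤ r ↔ a ≤ r) := by omega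
          simp only [h']
          exact List.sublist_cons_self _ _
    | cons p' u =>
      simp only [List.cons_append, phiTail_cons_cons] at ih ⊢
      exact ih.cons_cons _

theorem phiTail_append_cancel {u z z' : List ℕ} (h : phiTail (u ++ z) = phiTail (u ++ z')) :
    phiTail z = phiTail z' := by
  induction u with
  | nil => exact h
  | cons p u ih =>
    apply ih
    have ht : ∀ w, phiTail w = (phiTail (p :: w)).tail := fun w => by
      simp [phiTail]
    rw [ht, ht (u ++ z')]
    exact congrArg List.tail h

/-- If shifting `c s` to `s a` preserves the signature, each comparison of neighbours in `c s a` has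
the same outcome as the next one, so the word is weakly increasing or strictly decreasing. -/
theorem chain_of_phiTail_eq (a : ℕ) (t s : List ℕ) : ∀ c : ℕ,
    phiTail (c :: (s ++ t)) = phiTail (s ++ a :: t) →
      List.IsChain (· ≤ ·) (c :: (s ++ [a])) ∨ List.IsChain (· > ·) (c :: (s ++ [a])) := by
  induction s with
  | nil => intro c _; simpa using le_or_gt c a
  | cons r s ih =>
    intro c h
    cases s with
    | nil =>
      simp only [List.cons_append, List.nil_append, phiTail_cons_cons, List.cons.injEq] at h
      simp only [List.cons_append, List.nil_append, List.isChain_cons_cons,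
        List.isChain_singleton]
      have := h.1
      split_ifs at this <;> grind
    | cons r' s =>
      simp only [List.cons_append, phiTail_cons_cons, List.cons.injEq] at h ih
      have h1 := h.1
      have := ih r h.2
      simp only [List.cons_append, List.isChain_cons_cons] at this ⊢
      split_ifs at h1 <;> grind

theorem cons_eq_append_of_forall_eq {a : ℕ} {s : List ℕ} (h : ∀ b ∈ s, b = a) :
    a :: s = s ++ [a] := by
  rw [List.eq_replicate_of_mem h, ← List.replicate_succ, ← List.replicate_succ']

theorem eq_of_phiTail_eq {u s t : List ℕ} {a : ℕ}
    (h : phiTail (u ++ a :: (s ++ t)) = phiTail (u ++ (s ++ a :: t))) :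
    u ++ a :: (s ++ t) = u ++ (s ++ a :: t) := by
  have hs : a :: s = s ++ [a] := by
    rcases chain_of_phiTail_eq a t s a (phiTail_append_cancel h) with hc | hc
    · apply cons_eq_append_of_forall_eq
      rw [List.isChain_iff_pairwise] at hc
      intro b hb
      simp only [List.pairwise_cons, List.pairwise_append] at hc
      exact le_antisymm (hc.2.2.2 b hb a (by simp)) (hc.1 b (by simp [hb]))
    · rw [List.isChain_iff_pairwise] at hc
      exact absurd ((List.pairwise_cons.1 hc).1 a (by simp)) (lt_irrefl a)
  rw [← List.cons_append, hs]
  simp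

theorem symbol_eq {u s t : List ℕ} {a b q : ℕ} (ha : a < q) (hb : b < q)
    (h : (u ++ a :: (s ++ t)).sum ≡ (u ++ (s ++ b :: t)).sum [MOD q]) : a = b := by
  refine Nat.ModEq.eq_of_lt_of_lt (Nat.ModEq.add_right_cancel' (u.sum + s.sum + t.sum) ?_) ha hb
  convert h using 1 <;> simp only [List.sum_append, List.sum_cons] <;> ring

theorem phiTail_sublist_of_sublist {y x : List ℕ} (h : y.Sublist x)
    (hl : x.length = y.length + 1) : (phiTail y).Sublist (phiTail x) := by
  obtain ⟨u, v, a, rfl, rfl⟩ := exists_insertion h hl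
  exact phiTail_sublist u v a

/-- Tenengolts: for `q > 2` and `n ≥ 2`, if `x, x' ∈ Σ_q^n`
satisfy `VT(φ(x)_{[2,n]}) ≡ VT(φ(x')_{[2,n]}) (mod n)`, `Sum(x) = Sum(x')`
(mod q), and they share a common subsequence of length `n-1`, then `x = x'`. -/
theorem q_ary_single_deletion_code
    (q n : ℕ) (hq : 2 < q) (hn : 2 ≤ n) (x x' : List ℕ)
    (hx : x.length = n) (hx' : x'.length = n)
    (ha : ∀ a ∈ x, a < q) (ha' : ∀ a ∈ x', a < q)
    (hvt : vtSum (phiTail x) % n = vtSum (phiTail x') % n)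
    (hsum : x.sum % q = x'.sum % q)
    (hy : ∃ y : List ℕ, y.length = n - 1 ∧ y.Sublist x ∧ y.Sublist x') :
    x = x' := by
  obtain ⟨y, hyl, h, h'⟩ := hy
  have hl : x.length = y.length + 1 := by omega
  have hl' : x'.length = y.length + 1 := by omega
  have hphi : phiTail x = phiTail x' := by
    refine binary_vt (d := phiTail y) (m := n - 1) (phiTail_le_one x) (phiTail_le_one x')
      (by rw [phiTail_length]; omega) (by rw [phiTail_length]; omega)
      (by rw [phiTail_length]; omega)
      (phiTail_sublist_of_sublist h hl) (phiTail_sublist_of_sublist h' hl') ?_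
    rwa [Nat.sub_add_cancel (by omega)]
  obtain ⟨u, s, t, a, b, ⟨rfl, rfl⟩ | ⟨rfl, rfl⟩⟩ := two_insertions h h' hl hl'
  · obtain rfl := symbol_eq (ha a (by simp)) (ha' b (by simp)) hsum
    exact eq_of_phiTail_eq hphi
  · obtain rfl := symbol_eq (ha' a (by simp)) (ha b (by simp)) hsum.symm
    exact (eq_of_phiTail_eq hphi.symm).symm
end

section
/- Let q ≥ 2, t ≥ 1, n ≥ t, and x ∈ Σ_q^n. Let N_t(x) be the set of all x' ∈ Σ_q^n with x' ≠ x such that B_{≤t}(x) ∩ B_{≤t}(x') ≠ ∅. Then |N_t(x)| ≤ t·n^2·q^t. -/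
/-!
Deleting `s` symbols from a string of length `n` leaves length `n - s`, so a common element `y` of
the two balls arises from `x` and from `x'` by bursts of the same length `s`, and `x' ≠ x` forces
`s ≥ 1`. Hence `x'` is determined by `s ∈ {1, …, t}`, the position `i` of the burst in `x`, the
position `j` of the burst in `x'`, and the `s` deleted symbols of `x'`. As `s ≥ 1`, both positions
are less than `n`; padding the deleted block to length `t` leaves `q ^ t` choices for it. So the
neighbours lie in the range of the map `reinsert x` on a set of size `t * n * n * q ^ t`.
-/

/-- `burst t' x` is the set `B_{t'}(x)` of strings obtained from `x` by
deleting `t'` consecutive symbols. -/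
def burst (t' : ℕ) (x : List ℕ) : Set (List ℕ) :=
  {y | ∃ i, i + t' ≤ x.length ∧ y = x.take i ++ x.drop (i + t')}

/-- `burstLe t x` is the set `B_{≤t}(x) = ∪_{t'=0}^{t} B_{t'}(x)`. -/
def burstLe (t : ℕ) (x : List ℕ) : Set (List ℕ) :=
  {y | ∃ t' ≤ t, y ∈ burst t' x}

/-- Delete `k + 1` symbols of `x` at position `i`, then insert the first `k + 1` symbols of `w` at
position `j`, for the parameters `p = (k, i, j, w)`. -/
def reinsert {q t n : ℕ} (x : List ℕ) (p : Fin t × Fin n × Fin n × (Fin t → Fin q)) : List ℕ :=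
  let y := x.take p.2.1 ++ x.drop (p.2.1 + (p.1 + 1))
  y.take p.2.2.1 ++ ((List.ofFn fun m => (p.2.2.2 m : ℕ)).take (p.1 + 1) ++ y.drop p.2.2.1)

/-- A string is recovered from the result of a burst deletion by inserting the deleted block. -/
lemma eq_insert_of_burst (z y : List ℕ) (j s : ℕ) (hj : j + s ≤ z.length)
    (hy : y = z.take j ++ z.drop (j + s)) :
    z = y.take j ++ ((z.drop j).take s ++ y.drop j) := by
  have hl : (z.take j).length = j := by simp; omega
  have h1 : y.take j = z.take j := by rw [hy, List.take_left' hl]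
  have h2 : y.drop j = z.drop (j + s) := by rw [hy, List.drop_left' hl]
  rw [h1, h2, ← List.drop_drop, List.take_append_drop, List.take_append_drop]

/-- the number of strings `x' ∈ Σ_q^n`, `x' ≠ x`, whose
burst-deletion ball of radius at most `t` intersects that of `x`,
is at most `t·n²·qᵗ`. -/
theorem card_confusable_neighbors_le
    (q t n : ℕ) (hq : 2 ≤ q) (ht : 1 ≤ t) (hn : t ≤ n)
    (x : List ℕ) (hx : x.length = n) (ha : ∀ a ∈ x, a < q) :
    {x' : List ℕ | x'.length = n ∧ (∀ a ∈ x', a < q) ∧ x' ≠ x ∧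
        (burstLe t x ∩ burstLe t x').Nonempty}.ncard ≤ t * n ^ 2 * q ^ t := by
  have hsub : {x' : List ℕ | x'.length = n ∧ (∀ a ∈ x', a < q) ∧ x' ≠ x ∧
      (burstLe t x ∩ burstLe t x').Nonempty} ⊆
      reinsert (q := q) (t := t) (n := n) x '' Set.univ := by
    rintro z ⟨hz, hzq, hne, y, ⟨s, hs, i, hi, hyx⟩, ⟨s', -, j, hj, hyz⟩⟩
    have hss : s' = s := by
      have h1 := congrArg List.length hyx
      have h2 := congrArg List.length hyz
      simp only [List.length_append, List.length_take, List.length_drop] at h1 h2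
      omega
    subst hss
    have hpos : s' ≠ 0 := by
      rintro rfl
      simp only [Nat.add_zero, List.take_append_drop] at hyx hyz
      exact hne (hyz.symm.trans hyx)
    obtain ⟨k, rfl⟩ := Nat.exists_eq_succ_of_ne_zero hpos
    have hlt : ∀ m, z.getD m 0 < q := by
      intro m
      by_cases hm : m < z.length
      · rw [List.getD_eq_getElem _ _ hm]
        exact hzq _ (List.getElem_mem hm)
      · rw [List.getD_eq_default _ _ (by omega)]
        omega
    refine ⟨(⟨k, by omega⟩, ⟨i, by omega⟩, ⟨j, by omega⟩,
      fun m => ⟨z.getD (j + m) 0, hlt _⟩), Set.mem_univ _, ?_⟩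
    have hblock : (List.ofFn fun m : Fin t => z.getD (j + m) 0).take (k + 1)
        = (z.drop j).take (k + 1) := by
      apply List.ext_getElem
      · simp only [List.length_take, List.length_ofFn, List.length_drop]
        omega
      · intro m h1 h2
        simp only [List.length_take, List.length_drop] at h2
        simp only [List.getElem_take, List.getElem_ofFn, List.getElem_drop]
        exact List.getD_eq_getElem _ _ (by omega)
    have hrec := eq_insert_of_burst z y j (k + 1) hj hyz
    rw [← hblock, hyx] at hrec
    exact hrec.symm
  calc _ ≤ (reinsert (q := q) (t := t) (n := n) x '' Set.univ).ncard :=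
        Set.ncard_le_ncard hsub (Set.toFinite _)
    _ ≤ (Set.univ : Set (Fin t × Fin n × Fin n × (Fin t → Fin q))).ncard := Set.ncard_image_le
    _ = t * n ^ 2 * q ^ t := by
        rw [Set.ncard_univ, Nat.card_eq_fintype_card]
        simp only [Fintype.card_prod, Fintype.card_fin, Fintype.card_fun]
        ring
end

section
/- Let q ≥ 2, 1 ≤ t' ≤ n, x ∈ Σ_q^n, and y ∈ B_{t'}(x). For each j ∈ {1,…,t'}, let I_{t',j} = {ℓ ∈ [1,n] : ℓ ≡ j (mod t')} and I'_{t',j} = {ℓ ∈ [1,n−t'] : ℓ ≡ j (mod t')}. Then for each j ∈ {1,…,t'}, the subsequence y_{I'_{t',j}} of y is obtained from the subsequence x_{I_{t',j}} of x by deleting exactly one symbol, i.e., y_{I'_{t',j}} ∈ D_1(x_{I_{t',j}}). -/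
/-- The subsequence `x_{I_{t',j}}` of `x` indexed by the 1-indexed positions
`ℓ ∈ [1, |x|]` with `ℓ ≡ j (mod t')`.  (The 0-indexed position `i`
corresponds to the 1-indexed position `i+1`.) -/
def residSub (t' j : ℕ) (x : List ℕ) : List ℕ :=
  ((List.range x.length).filter (fun i => (i + 1) % t' == j % t')).map
    (fun i => x.getD i 0)

/-- The subsequence of `x` at the 0-indexed positions satisfying `p`. -/
def selectPos (p : ℕ → Bool) (x : List ℕ) : List ℕ :=
  ((List.range x.length).filter p).map (fun i => x.getD i 0)

lemma selectPos_append (p : ℕ → Bool) (a b : List ℕ) :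
    selectPos p (a ++ b) = selectPos p a ++ selectPos (fun i => p (a.length + i)) b := by
  unfold selectPos
  rw [List.length_append, List.range_add, List.filter_append, List.map_append, List.filter_map,
    List.map_map]
  congr 1
  · apply List.map_congr_left
    intro i hi
    have hlt : i < a.length := by simpa using (List.mem_filter.1 hi).1
    exact List.getD_append _ _ _ _ hlt
  · apply List.map_congr_left
    intro i _
    simp [List.getElem?_append_right]

/-- Among `t` consecutive integers, exactly one lies in a given residue class modulo `t`. -/
lemma length_filter_range_residue (t m j : ℕ) (ht : 1 ≤ t) :
    ((List.range t).filter (fun i => (m + i + 1) % t == j % t)).length = 1 := by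
  obtain ⟨k, hk, hkj⟩ : ∃ k < t, (m + k + 1) % t = j % t := by
    refine ⟨(j + (t - (m + 1) % t)) % t, Nat.mod_lt _ ht, ?_⟩
    have hm : (m + 1) % t < t := Nat.mod_lt _ ht
    have hdiv := Nat.mod_add_div (m + 1) t
    have hsum : m + 1 + (j + (t - (m + 1) % t)) = j + t * ((m + 1) / t + 1) := by
      rw [mul_add]; omega
    rw [add_right_comm, Nat.add_mod_mod, hsum, Nat.add_mul_mod_self_left]
  have hfilter : (List.range t).filter (fun i => (m + i + 1) % t == j % t)
      = (List.range t).filter (fun i => i == k) := by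
    apply List.filter_congr
    intro i hi
    rw [Bool.eq_iff_iff, beq_iff_eq, beq_iff_eq, ← hkj]
    refine ⟨fun h => ?_, fun h => by rw [h]⟩
    have hmod : i ≡ k [MOD t] :=
      Nat.ModEq.add_left_cancel' m (Nat.ModEq.add_right_cancel' 1 h)
    exact Nat.ModEq.eq_of_lt_of_lt hmod (List.mem_range.1 hi) hk
  rw [hfilter, ← List.countP_eq_length_filter]
  exact List.count_eq_one_of_mem List.nodup_range (List.mem_range.2 hk)

/-- if `y` is obtained from `x ∈ Σ_q^n` by a burst of `t'`
deletions, then for each `j ∈ [1, t']` the residue-class subsequence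
`y_{I'_{t',j}}` is obtained from `x_{I_{t',j}}` by a single deletion;
i.e. it is a subsequence of `x_{I_{t',j}}` of length `|x_{I_{t',j}}| - 1`. -/
theorem burst_residue_single_deletion
    (q t' n : ℕ) (hq : 2 ≤ q) (ht1 : 1 ≤ t') (htn : t' ≤ n)
    (x y : List ℕ) (hx : x.length = n) (ha : ∀ a ∈ x, a < q)
    (hy : y ∈ burst t' x) (j : ℕ) (hj1 : 1 ≤ j) (hjt : j ≤ t') :
    (residSub t' j y).Sublist (residSub t' j x) ∧
      (residSub t' j y).length = (residSub t' j x).length - 1 := by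
  obtain ⟨i, hi, rfl⟩ := hy
  obtain ⟨A, hA⟩ : ∃ A, A = x.take i := ⟨_, rfl⟩
  obtain ⟨M, hM⟩ : ∃ M, M = (x.drop i).take t' := ⟨_, rfl⟩
  obtain ⟨C, hC⟩ : ∃ C, C = x.drop (i + t') := ⟨_, rfl⟩
  have hxs : x = A ++ (M ++ C) := by
    rw [hA, hM, hC, ← List.drop_drop, List.take_append_drop, List.take_append_drop]
  have hMl : M.length = t' := by
    rw [hM, List.length_take, List.length_drop]; omega
  rw [← hA, ← hC, hxs]
  change (selectPos (fun i => (i + 1) % t' == j % t') (A ++ C)).Sublist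
      (selectPos (fun i => (i + 1) % t' == j % t') (A ++ (M ++ C))) ∧
    (selectPos (fun i => (i + 1) % t' == j % t') (A ++ C)).length =
      (selectPos (fun i => (i + 1) % t' == j % t') (A ++ (M ++ C))).length - 1
  -- The residue condition is `t'`-periodic, so the shift by the length of `M` is invisible on `C`.
  have hper : (fun k => (A.length + (M.length + k) + 1) % t' == j % t')
      = (fun k => (A.length + k + 1) % t' == j % t') := by
    funext k
    rw [hMl, show A.length + (t' + k) + 1 = A.length + k + 1 + t' by omega, Nat.add_mod_right]
  have hone : (selectPos (fun k => (A.length + k + 1) % t' == j % t') M).length = 1 := by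
    rw [selectPos, List.length_map, hMl]
    exact length_filter_range_residue t' A.length j ht1
  rw [selectPos_append, selectPos_append _ A (M ++ C), selectPos_append _ M C, hper]
  refine ⟨(List.Sublist.refl _).append (List.sublist_append_right _ _), ?_⟩
  simp only [List.length_append, hone]
  omega
end

section
/- Fix integers q > 2, t ≥ 1, and a real ε > 0. There exists n_0 such that for every n ≥ n_0 there is a function h : Σ_q^n → {0, 1, …, ⌈n^{4+ε}⌉ − 1} with the property that for all x, x' ∈ Σ_q^n with x ≠ x' and B_{≤t}(x) ∩ B_{≤t}(x') ≠ ∅, one has h(x) ≠ h(x'). (Consequently, any x ∈ Σ_q^n can be uniquely recovered from h(x) and any y ∈ B_{≤t}(x), using a sketch of 4·log_2 n + o(log_2 n) bits.) -/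
/-- Greedy colouring: if every `R`-neighbourhood is covered by a finset with fewer than `N` elements,
then any finite set of vertices is properly coloured by `N` colours. -/
lemma exists_greedy_colouring {α : Type*} [DecidableEq α] (R : α → α → Prop)
    (hR : ∀ a b, R a b → R b a) (N : ℕ) (nb : α → Finset α)
    (hcard : ∀ a, (nb a).card < N) (S : Finset α)
    (hnb : ∀ a ∈ S, ∀ b ∈ S, R a b → b ∈ nb a) (hN : 0 < N) :
    ∃ f : α → ℕ, (∀ a, f a < N) ∧ ∀ a ∈ S, ∀ b ∈ S, a ≠ b → R a b → f a ≠ f b := by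
  induction S using Finset.induction_on with
  | empty => exact ⟨fun _ => 0, fun _ => hN, by simp⟩
  | insert v S hv ih =>
    obtain ⟨f, hf, hS⟩ := ih fun a ha b hb =>
      hnb a (Finset.mem_insert_of_mem ha) b (Finset.mem_insert_of_mem hb)
    obtain ⟨c, hc, hcn⟩ : ∃ c ∈ Finset.range N, c ∉ (nb v).image f := by
      apply Finset.exists_mem_notMem_of_card_lt_card
      rw [Finset.card_range]
      exact Finset.card_image_le.trans_lt (hcard v)
    have key : ∀ b ∈ S, R v b → c ≠ f b := fun b hb hvb h =>
      hcn (Finset.mem_image.2 ⟨b, hnb v (Finset.mem_insert_self _ _) b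
        (Finset.mem_insert_of_mem hb) hvb, h.symm⟩)
    refine ⟨Function.update f v c, fun a => ?_, fun a ha b hb hab hRab => ?_⟩
    · by_cases h : a = v
      · subst h; simpa using hc
      · simpa [h] using hf a
    · rcases Finset.mem_insert.1 ha with rfl | ha' <;> rcases Finset.mem_insert.1 hb with rfl | hb'
      · exact absurd rfl hab
      · simpa [hab.symm] using key b hb' hRab
      · simpa [hab] using (key a ha' (hR _ _ hRab)).symm
      · have h1 : a ≠ v := fun h => hv (h ▸ ha')
        have h2 : b ≠ v := fun h => hv (h ▸ hb')
        simpa [h1, h2] using hS a ha' b hb' hab hRab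

/-- Strings obtained from `x` by deleting a burst of length `t' ≤ t` at position `i` and inserting a
word of length `t'` over `Σ_q` at position `j`, with `i, j ≤ n`. The inserted word is encoded as the
length-`t'` prefix of a word of length `t`. -/
def burstNbrs (q t n : ℕ) (x : List ℕ) : Finset (List ℕ) :=
  (Finset.range (t + 1) ×ˢ Finset.range (n + 1) ×ˢ Finset.range (n + 1) ×ˢ
    (Finset.univ : Finset (Fin t → Fin q))).image fun p =>
      (x.take p.2.1 ++ x.drop (p.2.1 + p.1)).take p.2.2.1 ++
        ((List.ofFn fun k => (p.2.2.2 k : ℕ)).take p.1 ++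
          (x.take p.2.1 ++ x.drop (p.2.1 + p.1)).drop p.2.2.1)

lemma card_burstNbrs_le (q t n : ℕ) (x : List ℕ) :
    (burstNbrs q t n x).card ≤ (t + 1) * ((n + 1) * ((n + 1) * q ^ t)) := by
  refine Finset.card_image_le.trans (le_of_eq ?_)
  simp [Finset.card_product]

lemma mem_burstNbrs {q t n : ℕ} (hq : 0 < q) {x x' : List ℕ} (hx : x.length = n)
    (hx' : x'.length = n) (hxq' : ∀ a ∈ x', a < q)
    (h : (burstLe t x ∩ burstLe t x').Nonempty) : x' ∈ burstNbrs q t n x := by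
  obtain ⟨y, ⟨s, hs, i, hi, hy⟩, ⟨s', hs', j, hj, hy'⟩⟩ := h
  obtain rfl : s = s' := by
    have h1 := congrArg List.length hy
    have h2 := congrArg List.length hy'
    simp only [List.length_append, List.length_take, List.length_drop] at h1 h2
    omega
  -- `getD` pads the deleted burst of `x'` to a word of length `t`.
  have hlt : ∀ k, x'.getD (j + k) 0 < q := by
    intro k
    rw [List.getD_eq_getElem?_getD]
    rcases h : x'[j + k]? with _ | a
    · simpa using hq
    · simpa using hxq' a (List.mem_of_getElem? h)
  refine Finset.mem_image.2 ⟨(s, i, j, fun k => ⟨x'.getD (j + k) 0, hlt k⟩), ?_, ?_⟩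
  · simp; omega
  · simp only [← hy]
    have h1 : y.take j = x'.take j := by
      rw [hy', List.take_append_of_le_length (by simp; omega)]; simp
    have h2 : y.drop j = x'.drop (j + s) := by
      rw [hy', List.drop_append_of_le_length (by simp; omega)]; simp
    have h3 : (List.ofFn fun k : Fin t => x'.getD (j + k) 0).take s = (x'.drop j).take s := by
      apply List.ext_getElem
      · simp; omega
      · intro k hk hk'
        simp only [List.length_take, List.length_drop] at hk'
        simp only [List.getElem_take, List.getElem_ofFn, List.getElem_drop]
        rw [List.getD_eq_getElem _ _ (by omega)]
    rw [h1, h2, h3, ← List.drop_drop, List.take_append_drop, List.take_append_drop]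

lemma finite_words (q n : ℕ) : {x : List ℕ | x.length = n ∧ ∀ a ∈ x, a < q}.Finite := by
  refine (Set.finite_range fun g : Fin n → Fin q => List.ofFn fun k => (g k : ℕ)).subset ?_
  rintro x ⟨rfl, hx⟩
  exact ⟨fun k => ⟨x[k], hx _ (List.getElem_mem _)⟩, by simp⟩

lemma nbr_bound_lt (q t n : ℕ) (ε : ℝ) (hε : 0 < ε) (hn : 4 * (t + 1) * q ^ t + 1 ≤ n) :
    (t + 1) * ((n + 1) * ((n + 1) * q ^ t)) < ⌈(n : ℝ) ^ ((4 : ℝ) + ε)⌉₊ := by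
  have hn1 : 1 ≤ n := by omega
  have h1 : (t + 1) * ((n + 1) * ((n + 1) * q ^ t)) < n ^ 4 := by
    have ha : (n + 1) * (n + 1) ≤ 4 * n ^ 2 := by nlinarith
    calc (t + 1) * ((n + 1) * ((n + 1) * q ^ t))
        = ((t + 1) * q ^ t) * ((n + 1) * (n + 1)) := by ring
      _ ≤ ((t + 1) * q ^ t) * (4 * n ^ 2) := Nat.mul_le_mul_left _ ha
      _ = (4 * (t + 1) * q ^ t) * n ^ 2 := by ring
      _ < n * n ^ 2 := Nat.mul_lt_mul_of_pos_right (by omega) (by positivity)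
      _ = n ^ 3 := by ring
      _ ≤ n ^ 4 := Nat.pow_le_pow_right hn1 (by norm_num)
  refine h1.trans_le ?_
  have h2 : ((n ^ 4 : ℕ) : ℝ) ≤ (n : ℝ) ^ ((4 : ℝ) + ε) := by
    calc ((n ^ 4 : ℕ) : ℝ) = (n : ℝ) ^ (4 : ℝ) := by
          rw [show (4 : ℝ) = ((4 : ℕ) : ℝ) by norm_num, Real.rpow_natCast]; push_cast; rfl
      _ ≤ _ := Real.rpow_le_rpow_of_exponent_le (by exact_mod_cast hn1) (by linarith)
  exact_mod_cast h2.trans (Nat.le_ceil _)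

/-- for fixed `q > 2`, `t ≥ 1` and `ε > 0`, for all large
enough `n` there is a sketch `h : Σ_q^n → {0, …, ⌈n^{4+ε}⌉ - 1}` separating
any two distinct strings whose burst-deletion balls of radius `≤ t`
intersect.  Hence any `x ∈ Σ_q^n` can be recovered from `h(x)` (of
`4·log₂ n + o(log₂ n)` bits) and any `y ∈ B_{≤t}(x)`. -/
theorem exists_small_sketch_burst
    (q t : ℕ) (ε : ℝ) (hq : 2 < q) (ht : 1 ≤ t) (hε : 0 < ε) :
    ∃ n₀ : ℕ, ∀ n ≥ n₀, ∃ h : List ℕ → ℕ,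
      (∀ x : List ℕ, x.length = n → (∀ a ∈ x, a < q) →
        h x < ⌈(n : ℝ) ^ ((4 : ℝ) + ε)⌉₊) ∧
      (∀ x x' : List ℕ, x.length = n → x'.length = n →
        (∀ a ∈ x, a < q) → (∀ a ∈ x', a < q) → x ≠ x' →
        (burstLe t x ∩ burstLe t x').Nonempty → h x ≠ h x') := by
  refine ⟨4 * (t + 1) * q ^ t + 1, fun n hn => ?_⟩
  have hb := nbr_bound_lt q t n ε hε hn
  obtain ⟨h, hlt, hsep⟩ := exists_greedy_colouring
    (fun x x' => (burstLe t x ∩ burstLe t x').Nonempty)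
    (fun x x' hxx' => by rwa [Set.inter_comm]) _ (burstNbrs q t n)
    (fun x => (card_burstNbrs_le q t n x).trans_lt hb) (finite_words q n).toFinset
    (fun x hx x' hx' hxx' => by
      simp only [Set.Finite.mem_toFinset, Set.mem_setOf_eq] at hx hx'
      exact mem_burstNbrs (by omega) hx.1 hx'.1 hx'.2 hxx')
    (Nat.zero_le _ |>.trans_lt hb)
  refine ⟨h, fun x _ _ => hlt x, fun x x' hx hx' hxq hxq' hne hxx' => ?_⟩
  exact hsep x (by simpa using ⟨hx, hxq⟩) x' (by simpa using ⟨hx', hxq'⟩) hne hxx'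
end

section
/- Let q ≥ 2, t ≥ 1, 1 ≤ t' ≤ t, x ∈ Σ_q^n, and y ∈ B_{t'}(x). Then a_0(x) − a_0(y) ∈ {−1, 0, 1, 2}; that is, a burst of at most t deletions destroys at most two occurrences of the pattern p = 0^t1^t and creates at most one new occurrence. -/
/-!
Two distinct occurrences of `0^t 1^t` are disjoint, so their starting positions differ by at
least `2t` (`occ_separated`). Let the burst remove the positions `[d, d + t')` of `x`. An occurrence
of `x` ending before `d` is also one of `y`, and conversely; an occurrence of `x` starting at or
after `d + t'` corresponds to one of `y` starting at or after `d`, shifted by `t'`.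

Every other occurrence of `x` starts strictly between `d - 2t` and `d + t'`; three of them would
need a range of at least `4t + 1` positions, while only `2t + t' - 1 ≤ 3t - 1` are available, so
there are at most two. Every other occurrence of `y` starts strictly between `d - 2t` and `d`, so
there is at most one.
-/

/-- The pattern `p = 0^t 1^t`: `t` zeros followed by `t` ones. -/
def pat (t : ℕ) : List ℕ := List.replicate t 0 ++ List.replicate t 1

/-- The set of (0-indexed) positions at which the pattern `p = 0^t 1^t`
occurs in `x`. -/
def patOcc (t : ℕ) (x : List ℕ) : Finset ℕ :=
  (Finset.range x.length).filter (fun i => (x.drop i).take (2 * t) = pat t)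

/-- `a_0(x) = Σ_i 1_p(x)_i`, the number of occurrences of `p` in `x`. -/
def a0 (t : ℕ) (x : List ℕ) : ℕ := (patOcc t x).card

/-- Pointwise description of an occurrence. For `t ≥ 1` the `some`s force the whole window to lie
inside `x`. -/
lemma mem_patOcc_iff {t : ℕ} (ht : 1 ≤ t) (x : List ℕ) (i : ℕ) :
    i ∈ patOcc t x ↔ ∀ k < t, x[i + k]? = some 0 ∧ x[i + t + k]? = some 1 := by
  have key : (x.drop i).take (2 * t) = pat t ↔
      ∀ k < t, x[i + k]? = some 0 ∧ x[i + t + k]? = some 1 := by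
    constructor
    · intro h k hk
      have h1 := congrArg (fun l => l[k]?) h
      have h2 := congrArg (fun l => l[t + k]?) h
      simp only [pat, List.getElem?_take, List.getElem?_drop, List.getElem?_append,
        List.length_replicate, List.getElem?_replicate] at h1 h2
      rw [if_pos (by omega), if_pos hk, if_pos hk] at h1
      rw [if_pos (by omega), if_neg (by omega), if_pos (by omega)] at h2
      exact ⟨h1, by rw [add_assoc]; exact h2⟩
    · intro h
      apply List.ext_getElem?
      intro k
      simp only [pat, List.getElem?_take, List.getElem?_drop, List.getElem?_append,
        List.length_replicate, List.getElem?_replicate]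
      by_cases hk : k < t
      · rw [if_pos (by omega), if_pos hk, if_pos hk, (h k hk).1]
      · by_cases hk2 : k < 2 * t
        · rw [if_pos hk2, if_neg hk, if_pos (by omega), ← (h (k - t) (by omega)).2]
          congr 1
          omega
        · rw [if_neg hk2, if_neg hk, if_neg (by omega)]
  unfold patOcc
  rw [Finset.mem_filter, key, Finset.mem_range, and_iff_right_iff_imp]
  intro h
  exact (List.getElem?_eq_some_iff.1 (h 0 ht).1).1

lemma occ_separated {t : ℕ} (ht : 1 ≤ t) {x : List ℕ} {i j : ℕ}
    (hi : i ∈ patOcc t x) (hj : j ∈ patOcc t x) (hij : i < j) : i + 2 * t ≤ j := by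
  rw [mem_patOcc_iff ht] at hi hj
  by_contra hlt
  by_cases h : j < i + t
  · -- the last zero of the occurrence at `j` lies among the ones of the occurrence at `i`
    have h1 := (hj (t - 1) (by omega)).1
    have h2 := (hi (j - i - 1) (by omega)).2
    rw [show i + t + (j - i - 1) = j + (t - 1) by omega, h1] at h2
    simp at h2
  · -- the first zero of the occurrence at `j` lies among the ones of the occurrence at `i`
    have h1 := (hj 0 (by omega)).1
    have h2 := (hi (j - i - t) (by omega)).2
    rw [show i + t + (j - i - t) = j + 0 by omega, h1] at h2
    simp at h2

lemma getElem?_burst (x : List ℕ) (d s k : ℕ) (hd : d + s ≤ x.length) :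
    (x.take d ++ x.drop (d + s))[k]? = if k < d then x[k]? else x[k + s]? := by
  have hl : (x.take d).length = d := by simp; omega
  rw [List.getElem?_append, hl]
  split_ifs with h
  · rw [List.getElem?_take, if_pos h]
  · rw [List.getElem?_drop]
    congr 1
    omega

/-- Occurrences ending before the burst are the same in both words. -/
lemma mem_patOcc_burst_low {t : ℕ} (ht : 1 ≤ t) {x : List ℕ} {d s i : ℕ}
    (hd : d + s ≤ x.length) (hi : i + 2 * t ≤ d) :
    i ∈ patOcc t (x.take d ++ x.drop (d + s)) ↔ i ∈ patOcc t x := by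
  rw [mem_patOcc_iff ht, mem_patOcc_iff ht]
  refine forall₂_congr fun k hk => ?_
  rw [getElem?_burst _ _ _ _ hd, getElem?_burst _ _ _ _ hd, if_pos (by omega), if_pos (by omega)]

/-- Occurrences starting after the burst are shifted by its length. -/
lemma mem_patOcc_burst_high {t : ℕ} (ht : 1 ≤ t) {x : List ℕ} {d s i : ℕ}
    (hd : d + s ≤ x.length) (hi : d ≤ i) :
    i ∈ patOcc t (x.take d ++ x.drop (d + s)) ↔ i + s ∈ patOcc t x := by
  rw [mem_patOcc_iff ht, mem_patOcc_iff ht]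
  refine forall₂_congr fun k hk => ?_
  rw [getElem?_burst _ _ _ _ hd, getElem?_burst _ _ _ _ hd, if_neg (by omega), if_neg (by omega),
    show i + k + s = i + s + k by omega, show i + t + k + s = i + s + t + k by omega]

/-- Splits a finite set of positions into those whose window of length `w` ends by `d`, those
at or after `e`, and the rest. -/
lemma card_split (S : Finset ℕ) (w d e : ℕ) (hde : d ≤ e) (hw : 1 ≤ w) :
    S.card = (S.filter (fun i => i + w ≤ d)).card + (S.filter (fun i => e ≤ i)).card
      + (S.filter (fun i => d < i + w ∧ i < e)).card := by
  rw [← Finset.card_filter_add_card_filter_not (s := S) (fun i => i + w ≤ d), add_assoc,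
    ← Finset.card_filter_add_card_filter_not
      (s := S.filter (fun i => ¬ i + w ≤ d)) (fun i => e ≤ i),
    Finset.filter_filter, Finset.filter_filter]
  congr 3 <;> ext i <;> simp only [Finset.mem_filter] <;> constructor <;> rintro ⟨h, h'⟩ <;>
    exact ⟨h, by omega⟩

/-- a burst of `t'` deletions (`1 ≤ t' ≤ t`) destroys at most
two occurrences of the pattern `p = 0^t 1^t` and creates at most one, i.e.
`a_0(x) − a_0(y) ∈ {−1, 0, 1, 2}`. -/
theorem a0_change_under_burst
    (q t t' n : ℕ) (hq : 2 ≤ q) (ht1 : 1 ≤ t') (ht2 : t' ≤ t)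
    (x y : List ℕ) (hx : x.length = n) (ha : ∀ a ∈ x, a < q)
    (hy : y ∈ burst t' x) :
    (a0 t x : ℤ) - (a0 t y : ℤ) ∈ ({-1, 0, 1, 2} : Set ℤ) := by
  obtain ⟨d, hd, rfl⟩ := hy
  have ht : 1 ≤ t := ht1.trans ht2
  unfold a0
  rw [card_split (patOcc t x) (2 * t) d (d + t') (by omega) (by omega),
    card_split (patOcc t (x.take d ++ x.drop (d + t'))) (2 * t) d d le_rfl (by omega)]
  have hlow : (patOcc t (x.take d ++ x.drop (d + t'))).filter (fun i => i + 2 * t ≤ d)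
      = (patOcc t x).filter (fun i => i + 2 * t ≤ d) := by
    ext i
    simp only [Finset.mem_filter]
    exact and_congr_left fun h => mem_patOcc_burst_low ht hd h
  have hhigh : ((patOcc t (x.take d ++ x.drop (d + t'))).filter (fun i => d ≤ i)).card
      = ((patOcc t x).filter (fun i => d + t' ≤ i)).card := by
    refine Finset.card_bij (fun i _ => i + t') ?_ ?_ ?_
    · intro i hi
      rw [Finset.mem_filter] at hi ⊢
      exact ⟨(mem_patOcc_burst_high ht hd hi.2).1 hi.1, by omega⟩
    · intro i _ j _ h
      exact Nat.add_right_cancel h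
    · intro j hj
      rw [Finset.mem_filter] at hj
      refine ⟨j - t', ?_, by omega⟩
      rw [Finset.mem_filter, mem_patOcc_burst_high ht hd (by omega),
        Nat.sub_add_cancel (by omega)]
      exact ⟨hj.1, by omega⟩
  have hdestroyed : ((patOcc t x).filter (fun i => d < i + 2 * t ∧ i < d + t')).card ≤ 2 := by
    by_contra hc
    obtain ⟨a, b, c, ha', hb', hc', hab, hac, hbc⟩ := Finset.two_lt_card_iff.1 (not_le.1 hc)
    rw [Finset.mem_filter] at ha' hb' hc'
    have h1 := occ_separated ht ha'.1 hb'.1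
    have h2 := occ_separated ht hb'.1 ha'.1
    have h3 := occ_separated ht ha'.1 hc'.1
    have h4 := occ_separated ht hc'.1 ha'.1
    have h5 := occ_separated ht hb'.1 hc'.1
    have h6 := occ_separated ht hc'.1 hb'.1
    omega
  have hcreated : ((patOcc t (x.take d ++ x.drop (d + t'))).filter
      (fun i => d < i + 2 * t ∧ i < d)).card ≤ 1 := by
    rw [Finset.card_le_one]
    intro a ha' b hb'
    rw [Finset.mem_filter] at ha' hb'
    have h1 := occ_separated ht ha'.1 hb'.1
    have h2 := occ_separated ht hb'.1 ha'.1
    omega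
  rw [hlow, hhigh]
  simp only [Set.mem_insert_iff, Set.mem_singleton_iff]
  omega
end

section
/- Fix integers q ≥ 2 and t ≥ 1, let p = 0^t1^t, and for n ≥ 1 let δ = 2t·q^{2t}·⌈log_2 n⌉. For each t' ∈ {1,…,t} there exists a function Loc taking as input a residue r_0 ∈ Z_4, a residue r_1 ∈ Z_{2n}, and a string y ∈ Σ_q^{n−t'}, and outputting an interval L ⊆ [1,n], such that: for every (p,δ)-dense x ∈ Σ_q^n and every y ∈ B_{t'}(x), the interval L = Loc(a_0(x) mod 4, a_1(x) mod 2n, y) has length at most 3δ and there exists an interval D ⊆ L of size t' with y = x_{[1,n]∖D}. In other words, from a_0(x) mod 4, a_1(x) mod 2n and y alone one can determine an interval of length at most 3δ that contains the positions of the burst of deletions. -/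
/-- `a_1(x) = Σ_i i·1_p(x)_i` (1-indexed positions, so an occurrence at
0-indexed position `i` contributes `i + 1`). -/
def a1 (t : ℕ) (x : List ℕ) : ℕ := ∑ i ∈ patOcc t x, (i + 1)

/-- `x` is `(p,δ)`-dense: every substring of `x` of length `δ` contains an
occurrence of `p = 0^t 1^t`. -/
def pdense (t δ : ℕ) (x : List ℕ) : Prop :=
  ∀ a, a + δ ≤ x.length →
    ∃ i, a ≤ i ∧ i + 2 * t ≤ a + δ ∧ (x.drop i).take (2 * t) = pat t

/-- The pattern `0^t 1^t` occurs at position `i` of the partial sequence `X`. -/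
def OccAt (t : ℕ) (X : ℕ → Option ℕ) (i : ℕ) : Prop :=
  (∀ u, i ≤ u → u < i + t → X u = some 0) ∧
    (∀ u, i + t ≤ u → u < i + 2 * t → X u = some 1)

lemma take_drop_eq_pat_iff (t : ℕ) (ht : 1 ≤ t) (x : List ℕ) (i : ℕ) :
    (x.drop i).take (2 * t) = pat t ↔ OccAt t (fun u => x[u]?) i := by
  constructor
  · intro h
    have key : ∀ k, k < 2 * t → x[i + k]? = (pat t)[k]? := by
      intro k hk
      rw [← h, List.getElem?_take, if_pos hk, List.getElem?_drop]
    refine ⟨fun u h1 h2 => ?_, fun u h1 h2 => ?_⟩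
    · obtain ⟨k, rfl⟩ := Nat.exists_eq_add_of_le h1
      have := key k (by omega)
      simp only [pat, List.getElem?_append, List.length_replicate, List.getElem?_replicate] at this
      rw [if_pos (by omega), if_pos (by omega)] at this
      exact this
    · obtain ⟨k, rfl⟩ := Nat.exists_eq_add_of_le (show i ≤ u by omega)
      have := key k (by omega)
      simp only [pat, List.getElem?_append, List.length_replicate, List.getElem?_replicate] at this
      rw [if_neg (by omega), if_pos (by omega)] at this
      exact this
  · rintro ⟨h0, h1⟩
    apply List.ext_getElem?
    intro k
    simp only [pat, List.getElem?_append, List.length_replicate, List.getElem?_replicate,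
      List.getElem?_take, List.getElem?_drop]
    by_cases hk : k < t
    · rw [if_pos (by omega), if_pos hk, if_pos hk]
      exact h0 _ (by omega) (by omega)
    · by_cases hk2 : k < 2 * t
      · rw [if_pos hk2, if_neg hk, if_pos (by omega)]
        exact h1 _ (by omega) (by omega)
      · rw [if_neg hk2, if_neg hk, if_neg (by omega)]

lemma mem_patOcc_iff_s9 (t : ℕ) (ht : 1 ≤ t) (x : List ℕ) (i : ℕ) :
    i ∈ patOcc t x ↔ OccAt t (fun u => x[u]?) i := by
  rw [patOcc, Finset.mem_filter, take_drop_eq_pat_iff t ht, Finset.mem_range]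
  refine ⟨fun h => h.2, fun h => ⟨?_, h⟩⟩
  have := h.1 i le_rfl (by omega)
  exact (List.getElem?_eq_some_iff.1 this).1

/-- Two distinct occurrences of `0^t 1^t` are disjoint. -/
lemma OccAt.disjoint {t : ℕ} {X : ℕ → Option ℕ} {i i' : ℕ} (h : OccAt t X i)
    (h' : OccAt t X i') (hlt : i < i') : i + 2 * t ≤ i' := by
  by_contra hc
  by_cases h1 : i' < i + t
  · have e1 := h.2 (i + t) le_rfl (by omega)
    have e2 := h'.1 (i + t) (by omega) (by omega)
    rw [e1] at e2; simp at e2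
  · have e1 := h.2 i' (by omega) (by omega)
    have e2 := h'.1 i' (by omega) (by omega)
    rw [e1] at e2; simp at e2

/-- `Y` arises from `X` by deleting the `s` symbols at positions `d, …, d + s - 1`. -/
def IsDeletion (s d : ℕ) (X Y : ℕ → Option ℕ) : Prop :=
  (∀ u, u < d → Y u = X u) ∧ (∀ u, d ≤ u → Y u = X (u + s))

/-- A symbol kept by the deletion cannot be a `0` of an occurrence in one of the two sequences
and a `1` of an occurrence in the other. -/
lemma IsDeletion.no_clash {s d t : ℕ} {X Y : ℕ → Option ℕ} (hd : IsDeletion s d X Y) {i j : ℕ}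
    (hi : OccAt t X i) (hj : OccAt t Y j) (u v : ℕ)
    (huv : (u < d ∧ v = u) ∨ (d ≤ u ∧ v = u + s)) :
    ¬(j ≤ u ∧ u < j + t ∧ i + t ≤ v ∧ v < i + 2 * t) ∧
      ¬(j + t ≤ u ∧ u < j + 2 * t ∧ i ≤ v ∧ v < i + t) := by
  have e : Y u = X v := by
    rcases huv with ⟨h, rfl⟩ | ⟨h, rfl⟩
    · exact hd.1 _ h
    · exact hd.2 _ h
  constructor
  · rintro ⟨a, b, c, f⟩
    rw [hj.1 u a b, hi.2 v c f] at e; simp at e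
  · rintro ⟨a, b, c, f⟩
    rw [hj.2 u a b, hi.1 v c f] at e; simp at e

/-- If an occurrence at `i` is destroyed and one at `j` is created, then `-s < i - j < 2s`: the
symbols next to the cut and those at the `0`/`1` boundaries of the two occurrences tie the
boundaries together. The constant is what makes three intermediate occurrences suffice when the
number of occurrences does not change. -/
lemma IsDeletion.destroyed_sub_created {s d t : ℕ} {X Y : ℕ → Option ℕ} (hs : 1 ≤ s) (hst : s ≤ t)
    (hd : IsDeletion s d X Y) {i j : ℕ} (hi : OccAt t X i) (hj : OccAt t Y j)
    (hi1 : d < i + 2 * t) (hi2 : i < d + s) (hj1 : d < j + 2 * t) (hj2 : j < d) :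
    j < i + s ∧ i < j + 2 * s := by
  have N := hd.no_clash hi hj
  have n1 := N (d - 1) (d - 1) (by omega)
  have n2 := N d (d + s) (by omega)
  have n3 := N (j + t)
  have n4 := N (j + t - 1)
  have n5 := fun u => N u (i + t)
  have n6 := fun u => N u (i + t - 1)
  by_cases c1 : j + t < d
  · have n3' := n3 (j + t) (by omega)
    have n4' := n4 (j + t - 1) (by omega)
    by_cases c2 : i + t < d
    · have := n5 (i + t) (by omega)
      have := n6 (i + t - 1) (by omega)
      omega
    · by_cases c3 : d + s ≤ i + t - 1
      · have := n5 (i + t - s) (by omega)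
        have := n6 (i + t - 1 - s) (by omega)
        omega
      · omega
  · have n3' := n3 (j + t + s) (by omega)
    by_cases c2 : i + t < d
    · have := n5 (i + t) (by omega)
      have := n6 (i + t - 1) (by omega)
      omega
    · by_cases c3 : d + s ≤ i + t - 1
      · have := n5 (i + t - s) (by omega)
        have := n6 (i + t - 1 - s) (by omega)
        omega
      · omega

/-- When two occurrences are destroyed, the cut in `Y` falls between a `1` and a `0`, so no
occurrence is created. -/
lemma IsDeletion.not_created_of_two {s d t : ℕ} {X Y : ℕ → Option ℕ} (hst : s ≤ t)
    (hd : IsDeletion s d X Y) {i i' j : ℕ} (hi : OccAt t X i) (hi' : OccAt t X i')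
    (hlt : i < i') (hj : OccAt t Y j)
    (hi1 : d < i + 2 * t) (hi2 : i' < d + s) (hj1 : d < j + 2 * t) (hj2 : j < d) : False := by
  have := hi.disjoint hi' hlt
  have n1 := hd.no_clash hi hj (d - 1) (d - 1) (by omega)
  have n2 := hd.no_clash hi' hj d (d + s) (by omega)
  omega

/-- A set in `[a, b)` whose elements are pairwise `w` apart has at most `⌈(b - a) / w⌉` elements. -/
lemma card_separated_lt (S : Finset ℕ) (a b w : ℕ) (hw : 1 ≤ w) (hab : a ≤ b)
    (hS : ∀ i ∈ S, a ≤ i ∧ i < b)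
    (hsep : ∀ i ∈ S, ∀ i' ∈ S, i < i' → i + w ≤ i') : w * S.card < (b - a) + w := by
  rcases S.eq_empty_or_nonempty with rfl | ⟨e, he⟩
  · simp; omega
  have hb := hS e he
  have hcard : S.card ≤ (Finset.range ((b - a - 1) / w + 1)).card := by
    apply Finset.card_le_card_of_injOn (fun i => (i - a) / w)
    · intro i hi
      have := hS i hi
      simp only [Finset.coe_range, Set.mem_Iio]
      exact Nat.lt_succ_of_le (Nat.div_le_div_right (by omega))
    · intro i hi i' hi' heq
      have h1 := hS i hi
      have h2 := hS i' hi'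
      have key : ∀ i ∈ S, ∀ i' ∈ S, i < i' → (i - a) / w < (i' - a) / w := by
        intro i hi i' hi' hlt
        have h1 := hS i hi
        have := hsep i hi i' hi' hlt
        have h3 : (i - a) / w + 1 = (i - a + w) / w := (Nat.add_div_right _ hw).symm
        have h4 : (i - a + w) / w ≤ (i' - a) / w := Nat.div_le_div_right (by omega)
        omega
      rcases lt_trichotomy i i' with h | h | h
      · have := key i hi i' hi' h; simp only at heq; omega
      · exact h
      · have := key i' hi' i hi h; simp only at heq; omega
  rw [Finset.card_range] at hcard
  have h1 : w * S.card ≤ w * ((b - a - 1) / w + 1) := Nat.mul_le_mul_left _ hcard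
  have h2 : w * ((b - a - 1) / w) ≤ b - a - 1 := Nat.mul_div_le _ _
  rw [mul_add] at h1
  omega

/-- The effect of a burst at `d` on the set of occurrences: `A` and `B` are the occurrence sets
before and after, and the gain `G` of the position sum is what remains after accounting for the
shift by `s` of the occurrences to the right of the cut. -/
lemma burst_effect (t s d : ℕ) (hs : 1 ≤ s) (hst : s ≤ t) (X Y : ℕ → Option ℕ)
    (hd : IsDeletion s d X Y) (A B : Finset ℕ) (hA : ∀ i, i ∈ A ↔ OccAt t X i)
    (hB : ∀ i, i ∈ B ↔ OccAt t Y i) :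
    ∃ G : ℤ, (∑ i ∈ A, ((i : ℤ) + 1)) = (∑ i ∈ B, ((i : ℤ) + 1)) + G
        + s * (B.filter (fun i => d ≤ i)).card ∧
      ((A.card = B.card ∧ -(s : ℤ) < G ∧ G < 2 * s) ∨
       (A.card + 1 = B.card ∧ -(d : ℤ) ≤ G ∧ G ≤ -((d : ℤ) - 2 * t + 2) ∧ G ≤ -1) ∨
       (A.card = B.card + 1 ∧ (d : ℤ) - 2 * t + 2 ≤ G ∧ 1 ≤ G ∧ G ≤ d + s) ∨
       (A.card = B.card + 2 ∧ 2 * ((d : ℤ) - 2 * t + 2) ≤ G ∧ 1 ≤ G ∧ G ≤ 2 * (d + s))) := by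
  set Des := A.filter (fun i => d < i + 2 * t ∧ i < d + s) with hDes
  set Cre := B.filter (fun i => d < i + 2 * t ∧ i < d) with hCre
  set R := B.filter (fun i => d ≤ i) with hR
  have mDes : ∀ i, i ∈ Des ↔ OccAt t X i ∧ d < i + 2 * t ∧ i < d + s := by
    intro i; rw [hDes, Finset.mem_filter, hA]
  have mCre : ∀ i, i ∈ Cre ↔ OccAt t Y i ∧ d < i + 2 * t ∧ i < d := by
    intro i; rw [hCre, Finset.mem_filter, hB]
  have left_iff : ∀ i, i + 2 * t ≤ d → (OccAt t X i ↔ OccAt t Y i) := by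
    intro i hi
    constructor
    · rintro ⟨h0, h1⟩
      exact ⟨fun u a b => (hd.1 u (by omega)).trans (h0 u a b),
        fun u a b => (hd.1 u (by omega)).trans (h1 u a b)⟩
    · rintro ⟨h0, h1⟩
      exact ⟨fun u a b => (hd.1 u (by omega)).symm.trans (h0 u a b),
        fun u a b => (hd.1 u (by omega)).symm.trans (h1 u a b)⟩
  have right_iff : ∀ i, d ≤ i → (OccAt t X (i + s) ↔ OccAt t Y i) := by
    intro i hi
    constructor
    · rintro ⟨h0, h1⟩
      exact ⟨fun u a b => (hd.2 u (by omega)).trans (h0 _ (by omega) (by omega)),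
        fun u a b => (hd.2 u (by omega)).trans (h1 _ (by omega) (by omega))⟩
    · rintro ⟨h0, h1⟩
      constructor
      · intro u a b
        have := hd.2 (u - s) (by omega)
        rw [Nat.sub_add_cancel (by omega)] at this
        rw [← this]; exact h0 _ (by omega) (by omega)
      · intro u a b
        have := hd.2 (u - s) (by omega)
        rw [Nat.sub_add_cancel (by omega)] at this
        rw [← this]; exact h1 _ (by omega) (by omega)
  -- the surviving occurrences: left of the burst, and right of it (shifted by `s`)
  set Lf := B.filter (fun i => i + 2 * t ≤ d) with hLf
  have hinj : Function.Injective (fun i : ℕ => i + s) := fun a b h => by simpa using h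
  have decA : ∀ f : ℕ → ℤ, ∑ i ∈ A, f i
      = ∑ i ∈ Lf, f i + ∑ i ∈ Des, f i + ∑ i ∈ R, f (i + s) := by
    intro f
    have e1 : A = Lf ∪ Des ∪ R.map ⟨_, hinj⟩ := by
      ext i
      simp only [Finset.mem_union, Finset.mem_map, Function.Embedding.coeFn_mk, mDes, hLf, hR,
        Finset.mem_filter, hB, hA]
      constructor
      · intro h
        by_cases c1 : i + 2 * t ≤ d
        · exact Or.inl (Or.inl ⟨(left_iff i c1).1 h, c1⟩)
        · by_cases c2 : i < d + s
          · exact Or.inl (Or.inr ⟨h, by omega, c2⟩)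
          · refine Or.inr ⟨i - s, ⟨(right_iff _ (by omega)).1 ?_, by omega⟩, by omega⟩
            rwa [Nat.sub_add_cancel (by omega)]
      · rintro ((⟨h, c⟩ | ⟨h, c⟩) | ⟨k, ⟨h, c⟩, rfl⟩)
        · exact (left_iff i c).2 h
        · exact h
        · exact (right_iff k c).2 h
    have d1 : Disjoint Lf Des := by
      rw [Finset.disjoint_left]
      intro i h1 h2
      rw [hLf, Finset.mem_filter] at h1
      rw [mDes] at h2
      omega
    have d2 : Disjoint (Lf ∪ Des) (R.map ⟨_, hinj⟩) := by
      rw [Finset.disjoint_left]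
      intro i h1 h2
      simp only [Finset.mem_union, Finset.mem_map, Function.Embedding.coeFn_mk, mDes, hLf, hR,
        Finset.mem_filter] at h1 h2
      obtain ⟨k, ⟨_, hk⟩, rfl⟩ := h2
      omega
    rw [e1, Finset.sum_union d2, Finset.sum_union d1, Finset.sum_map]
    rfl
  have decB : ∀ f : ℕ → ℤ, ∑ i ∈ B, f i
      = ∑ i ∈ Lf, f i + ∑ i ∈ Cre, f i + ∑ i ∈ R, f i := by
    intro f
    have e1 : B = Lf ∪ Cre ∪ R := by
      ext i
      simp only [Finset.mem_union, hCre, hLf, hR, Finset.mem_filter]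
      constructor
      · intro h
        by_cases c1 : i + 2 * t ≤ d
        · exact Or.inl (Or.inl ⟨h, c1⟩)
        · by_cases c2 : i < d
          · exact Or.inl (Or.inr ⟨h, by omega, c2⟩)
          · exact Or.inr ⟨h, by omega⟩
      · rintro ((⟨h, c⟩ | ⟨h, c⟩) | ⟨h, c⟩) <;> exact h
    have d1 : Disjoint Lf Cre := by
      rw [Finset.disjoint_left]
      intro i h1 h2
      simp only [hCre, hLf, Finset.mem_filter] at h1 h2
      omega
    have d2 : Disjoint (Lf ∪ Cre) R := by
      rw [Finset.disjoint_left]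
      intro i h1 h2
      simp only [Finset.mem_union, hCre, hLf, hR, Finset.mem_filter] at h1 h2
      omega
    conv_lhs => rw [e1]
    rw [Finset.sum_union d2, Finset.sum_union d1]
  have cardEq : (A.card : ℤ) + Cre.card = B.card + Des.card := by
    have h1 := decA (fun _ => 1)
    have h2 := decB (fun _ => 1)
    simp only [Finset.sum_const, nsmul_eq_mul, mul_one] at h1 h2
    omega
  have sumEq : (∑ i ∈ A, ((i : ℤ) + 1)) = (∑ i ∈ B, ((i : ℤ) + 1))
      + (∑ i ∈ Des, ((i : ℤ) + 1) - ∑ i ∈ Cre, ((i : ℤ) + 1)) + s * R.card := by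
    have h1 := decA (fun i => (i : ℤ) + 1)
    have h2 := decB (fun i => (i : ℤ) + 1)
    have h3 : ∑ i ∈ R, (((i + s : ℕ) : ℤ) + 1) = ∑ i ∈ R, ((i : ℤ) + 1) + s * R.card := by
      have : ∀ i ∈ R, (((i + s : ℕ) : ℤ) + 1) = ((i : ℤ) + 1) + s := by
        intro i _; push_cast; ring
      rw [Finset.sum_congr rfl this, Finset.sum_add_distrib, Finset.sum_const, nsmul_eq_mul,
        mul_comm (s : ℤ)]
    rw [h1, h2, h3]; ring
  have hCre1 : Cre.card ≤ 1 := by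
    rw [Finset.card_le_one]
    intro a ha b hb
    rw [mCre] at ha hb
    rcases lt_trichotomy a b with h | h | h
    · have := ha.1.disjoint hb.1 h; omega
    · exact h
    · have := hb.1.disjoint ha.1 h; omega
  have hDes2 : Des.card ≤ 2 := by
    by_contra hc
    have h1 := card_separated_lt Des (d + 1 - 2 * t) (d + s) (2 * t) (by omega) (by omega)
      (fun i hi => by have := (mDes i).1 hi; omega)
      (fun i hi i' hi' h => ((mDes i).1 hi).1.disjoint ((mDes i').1 hi').1 h)
    have h2 : 2 * t * 3 ≤ 2 * t * Des.card := Nat.mul_le_mul_left _ (by omega)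
    omega
  refine ⟨_, sumEq, ?_⟩
  rcases Nat.le_one_iff_eq_zero_or_eq_one.1 hCre1 with hc | hc
  · have hc0 := Finset.card_eq_zero.1 hc
    obtain hk | hk | hk : Des.card = 0 ∨ Des.card = 1 ∨ Des.card = 2 := by omega
    · left
      rw [Finset.card_eq_zero.1 hk, hc0]
      simp
      omega
    · right; right; left
      obtain ⟨i, hi⟩ := Finset.card_eq_one.1 hk
      have := (mDes i).1 (by simp [hi])
      rw [hi, hc0]
      simp only [Finset.sum_singleton, Finset.sum_empty]
      omega
    · right; right; right
      obtain ⟨i, i', hne, hi⟩ := Finset.card_eq_two.1 hk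
      have h1 := (mDes i).1 (by simp [hi])
      have h2 := (mDes i').1 (by simp [hi])
      rw [hi, hc0, Finset.sum_pair hne]
      simp only [Finset.sum_empty]
      omega
  · obtain ⟨j, hj⟩ := Finset.card_eq_one.1 hc
    have hj' := (mCre j).1 (by simp [hj])
    obtain hk | hk | hk : Des.card = 0 ∨ Des.card = 1 ∨ Des.card = 2 := by omega
    · right; left
      rw [Finset.card_eq_zero.1 hk, hj]
      simp only [Finset.sum_singleton, Finset.sum_empty]
      omega
    · left
      obtain ⟨i, hi⟩ := Finset.card_eq_one.1 hk
      have h1 := (mDes i).1 (by simp [hi])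
      have := hd.destroyed_sub_created hs hst h1.1 hj'.1 h1.2.1 h1.2.2 hj'.2.1 hj'.2.2
      rw [hi, hj]
      simp only [Finset.sum_singleton]
      omega
    · exfalso
      obtain ⟨i, i', hne, hi⟩ := Finset.card_eq_two.1 hk
      have h1 := (mDes i).1 (by simp [hi])
      have h2 := (mDes i').1 (by simp [hi])
      rcases lt_or_gt_of_ne hne with h | h
      · exact hd.not_created_of_two hst h1.1 h2.1 h hj'.1 h1.2.1 h2.2.2 hj'.2.1 hj'.2.2
      · exact hd.not_created_of_two hst h2.1 h1.1 h hj'.1 h2.2.1 h1.2.2 hj'.2.1 hj'.2.2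

lemma isDeletion_take_append_drop (x : List ℕ) (d s : ℕ) (h : d + s ≤ x.length) :
    IsDeletion s d (fun u => x[u]?) (fun u => (x.take d ++ x.drop (d + s))[u]?) := by
  constructor
  · intro u hu
    simp only [List.getElem?_append, List.length_take]
    rw [if_pos (by omega), List.getElem?_take, if_pos hu]
  · intro u hu
    simp only [List.getElem?_append, List.length_take]
    rw [if_neg (by omega), List.getElem?_drop]
    congr 1; omega

/-- Two dense words with the same syndromes that give the same `y` have bursts lying in a common
interval of length `3δ`. -/
lemma burst_positions_close (t n δ s : ℕ) (ht : 1 ≤ t) (hδ : 8 * t ≤ δ) (hs : 1 ≤ s) (hst : s ≤ t)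
    (x₁ x₂ y : List ℕ) (hl₁ : x₁.length = n) (hl₂ : x₂.length = n) (hdense : pdense t δ x₂)
    (h0 : a0 t x₁ % 4 = a0 t x₂ % 4) (h1 : a1 t x₁ % (2 * n) = a1 t x₂ % (2 * n))
    (d₁ d₂ : ℕ) (hle : d₁ ≤ d₂) (hd₂ : d₂ + s ≤ n)
    (hy₁ : y = x₁.take d₁ ++ x₁.drop (d₁ + s)) (hy₂ : y = x₂.take d₂ ++ x₂.drop (d₂ + s)) :
    d₂ + s ≤ d₁ + 3 * δ := by
  by_contra hfar
  have D₁ := isDeletion_take_append_drop x₁ d₁ s (by omega)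
  have D₂ := isDeletion_take_append_drop x₂ d₂ s (by omega)
  rw [← hy₁] at D₁
  rw [← hy₂] at D₂
  obtain ⟨G₁, hG₁, hc₁⟩ := burst_effect t s d₁ hs hst _ _ D₁ (patOcc t x₁) (patOcc t y)
    (mem_patOcc_iff_s9 t ht x₁) (mem_patOcc_iff_s9 t ht y)
  obtain ⟨G₂, hG₂, hc₂⟩ := burst_effect t s d₂ hs hst _ _ D₂ (patOcc t x₂) (patOcc t y)
    (mem_patOcc_iff_s9 t ht x₂) (mem_patOcc_iff_s9 t ht y)
  have ha₁ : (∑ i ∈ patOcc t x₁, ((i : ℤ) + 1)) = (a1 t x₁ : ℤ) := by simp [a1]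
  have ha₂ : (∑ i ∈ patOcc t x₂, ((i : ℤ) + 1)) = (a1 t x₂ : ℤ) := by simp [a1]
  rw [ha₁] at hG₁
  rw [ha₂] at hG₂
  set M := (patOcc t y).filter (fun i => d₁ ≤ i ∧ i < d₂) with hM
  have hsplit : ((patOcc t y).filter (fun i => d₁ ≤ i)).card
      = M.card + ((patOcc t y).filter (fun i => d₂ ≤ i)).card := by
    rw [hM, ← Finset.card_union_of_disjoint]
    · congr 1
      ext i
      simp only [Finset.mem_union, Finset.mem_filter]
      by_cases hi : i ∈ patOcc t y <;> simp only [hi, true_and, false_and, or_self]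
      omega
    · rw [Finset.disjoint_left]
      intro i a b
      simp only [Finset.mem_filter] at a b
      omega
  have hupper : 2 * t * M.card < (d₂ - d₁) + 2 * t := by
    refine card_separated_lt M d₁ d₂ (2 * t) (by omega) hle ?_ ?_
    · intro i hi; exact (Finset.mem_filter.1 hi).2
    · intro i hi i' hi' h
      exact ((mem_patOcc_iff_s9 t ht y i).1 (Finset.mem_filter.1 hi).1).disjoint
        ((mem_patOcc_iff_s9 t ht y i').1 (Finset.mem_filter.1 hi').1) h
  have hlower : 3 ≤ M.card := by
    have next : ∀ a, d₁ ≤ a → a + δ ≤ d₂ → ∃ i, a ≤ i ∧ i + 2 * t ≤ a + δ ∧ i ∈ M := by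
      intro a ha hb
      obtain ⟨i, hi1, hi2, hi3⟩ := hdense a (by omega)
      refine ⟨i, hi1, hi2, ?_⟩
      rw [take_drop_eq_pat_iff t ht] at hi3
      rw [hM, Finset.mem_filter, mem_patOcc_iff_s9 t ht]
      refine ⟨⟨fun u a b => (D₂.1 u (by omega)).trans (hi3.1 u a b),
        fun u a b => (D₂.1 u (by omega)).trans (hi3.2 u a b)⟩, by omega, by omega⟩
    obtain ⟨i₁, a₁, b₁, m₁⟩ := next d₁ le_rfl (by omega)
    obtain ⟨i₂, a₂, b₂, m₂⟩ := next (i₁ + 1) (by omega) (by omega)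
    obtain ⟨i₃, a₃, b₃, m₃⟩ := next (i₂ + 1) (by omega) (by omega)
    have hsub : ({i₁, i₂, i₃} : Finset ℕ) ⊆ M := by
      intro i hi
      simp only [Finset.mem_insert, Finset.mem_singleton] at hi
      rcases hi with rfl | rfl | rfl <;> assumption
    have hcard : ({i₁, i₂, i₃} : Finset ℕ).card = 3 := by
      rw [Finset.card_eq_three]
      exact ⟨i₁, i₂, i₃, by omega, by omega, by omega, rfl⟩
    rw [← hcard]; exact Finset.card_le_card hsub
  -- `s * |M|` is at least `3s` and grows with slope at most `1/2` in `d₂ - d₁`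
  have hsM_lower : s * 3 ≤ s * M.card := Nat.mul_le_mul_left _ hlower
  have hsM_upper : 2 * (s * M.card) < (d₂ - d₁) + 2 * t := by
    have : s * M.card ≤ t * M.card := Nat.mul_le_mul_right _ hst
    calc 2 * (s * M.card) ≤ 2 * (t * M.card) := by omega
      _ = 2 * t * M.card := by ring
      _ < _ := hupper
  have hdiff : (a1 t x₁ : ℤ) - a1 t x₂ = G₁ - G₂ + ((s * M.card : ℕ) : ℤ) := by
    rw [hG₁, hG₂, hsplit]; push_cast; ring
  generalize s * M.card = K at hsM_lower hsM_upper hdiff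
  -- equal residues modulo `2n` at distance below `2n` coincide
  have hmod : (2 * n : ℤ) ∣ (a1 t x₁ : ℤ) - a1 t x₂ := by
    have : (a1 t x₂) ≡ (a1 t x₁) [MOD 2 * n] := h1.symm
    have := (Nat.modEq_iff_dvd.1 this)
    simpa using this
  have hzero : |(a1 t x₁ : ℤ) - a1 t x₂| < 2 * n → (a1 t x₁ : ℤ) - a1 t x₂ = 0 :=
    fun h => Int.eq_zero_of_abs_lt_dvd hmod h
  rw [hdiff, abs_lt] at hzero
  unfold a0 at h0
  rcases hc₁ with hc₁ | hc₁ | hc₁ | hc₁ <;> rcases hc₂ with hc₂ | hc₂ | hc₂ | hc₂ <;> omega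

/-- Lemma 3: let `δ = 2t·q^{2t}·⌈log₂ n⌉` and `1 ≤ t' ≤ t`.
There is a function `Loc` which, from `a_0(x) mod 4`, `a_1(x) mod 2n` and
`y ∈ B_{t'}(x)` alone, outputs a (half-open, 0-indexed) interval
`[a, b) ⊆ [0, n)` of length at most `3δ` containing the deletion burst:
there is `d` with `a ≤ d`, `d + t' ≤ b` and `y = x_{[1,n] ∖ [d+1, d+t']}`,
provided `x ∈ Σ_q^n` is `(p,δ)`-dense. -/
theorem locate_burst_from_syndromes
    (q t n : ℕ) (hq : 2 ≤ q) (ht : 1 ≤ t) (hn : 1 ≤ n)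
    (δ : ℕ) (hδ : δ = 2 * t * q ^ (2 * t) * Nat.clog 2 n)
    (t' : ℕ) (ht1 : 1 ≤ t') (ht2 : t' ≤ t) :
    ∃ Loc : ℕ → ℕ → List ℕ → ℕ × ℕ,
      ∀ x y : List ℕ, x.length = n → (∀ a ∈ x, a < q) → pdense t δ x →
        y ∈ burst t' x →
        ∃ a b : ℕ, Loc (a0 t x % 4) (a1 t x % (2 * n)) y = (a, b) ∧
          b ≤ n ∧ b - a ≤ 3 * δ ∧
          ∃ d, a ≤ d ∧ d + t' ≤ b ∧ y = x.take d ++ x.drop (d + t') := by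
  let S : ℕ → ℕ → List ℕ → Set ℕ := fun r₀ r₁ y =>
    {d | ∃ x : List ℕ, x.length = n ∧ a0 t x % 4 = r₀ ∧
      a1 t x % (2 * n) = r₁ ∧ d + t' ≤ n ∧ y = x.take d ++ x.drop (d + t')}
  refine ⟨fun r₀ r₁ y => (sInf (S r₀ r₁ y), min (sInf (S r₀ r₁ y) + 3 * δ) n), ?_⟩
  -- `S` collects the compatible burst positions; the interval starts at the least of them
  rintro x y hx - hdense ⟨d, hd, hy⟩
  refine ⟨_, _, rfl, min_le_right _ _, by omega, d, ?_⟩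
  have hmem : d ∈ S (a0 t x % 4) (a1 t x % (2 * n)) y :=
    ⟨x, hx, rfl, rfl, by omega, hy⟩
  have hle := Nat.sInf_le hmem
  obtain ⟨x₁, hx₁, h0, h1, -, hy₁⟩ := Nat.sInf_mem ⟨d, hmem⟩
  -- if `δ = 0`, density fails because the empty substring contains no pattern
  have hδ8 : 8 * t ≤ δ := by
    have hclog : 1 ≤ Nat.clog 2 n := by
      by_contra hc
      have hδ0 : δ = 0 := by rw [hδ, show Nat.clog 2 n = 0 by omega, mul_zero]
      obtain ⟨i, _, h, _⟩ := hdense 0 (by omega)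
      omega
    have hpow : 4 ≤ q ^ (2 * t) :=
      calc 4 = 2 ^ 2 := rfl
        _ ≤ q ^ 2 := Nat.pow_le_pow_left hq 2
        _ ≤ q ^ (2 * t) := Nat.pow_le_pow_right (by omega) (by omega)
    calc 8 * t = 2 * t * 4 * 1 := by ring
      _ ≤ 2 * t * q ^ (2 * t) * Nat.clog 2 n :=
        Nat.mul_le_mul (Nat.mul_le_mul_left _ hpow) hclog
      _ = δ := hδ.symm
  have hclose := burst_positions_close t n δ t' ht hδ8 ht1 ht2 x₁ x y hx₁ hx hdense h0 h1 _ d hle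
    (by omega) hy₁ hy
  exact ⟨hle, le_min hclose (by omega), hy⟩
end

section
/- Let q ≥ 2, t ≥ 1, δ = 2t·q^{2t}·⌈log_2 n⌉, and suppose n ≥ q^{(6t+3−log_q e)/0.4}. Let S ⊆ Σ_q^δ be the set of all strings of length δ that contain no occurrence of the pattern p = 0^t1^t. Then |S| ≤ q^{δ − ⌈log_q n⌉ − 6t − 2}; equivalently, there exists an injective function g : S → Σ_q^{δ − ⌈log_q n⌉ − 6t − 2}. -/
/-- The strings of length `m` over `Σ_q`. -/
def words (q m : ℕ) : Set (List ℕ) := {x | x.length = m ∧ ∀ a ∈ x, a < q}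

/-- The strings of length `m` over `Σ_q` that contain no occurrence of `0^t 1^t`. -/
def avoiding (q t m : ℕ) : Set (List ℕ) :=
  {x | x.length = m ∧ (∀ a ∈ x, a < q) ∧ ¬∃ i, (x.drop i).take (2 * t) = pat t}

lemma ncard_image2_le_mul {α β γ : Type*} (f : α → β → γ) {s : Set α} {u : Set β}
    (hs : s.Finite) (hu : u.Finite) : (Set.image2 f s u).ncard ≤ s.ncard * u.ncard := by
  rw [← Set.image_uncurry_prod, ← Set.ncard_prod]
  exact Set.ncard_image_le (hs.prod hu)

lemma words_finite_ncard_le (q m : ℕ) : (words q m).Finite ∧ (words q m).ncard ≤ q ^ m := by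
  induction m with
  | zero =>
    have h : words q 0 ⊆ {[]} := by
      rintro x ⟨hx, -⟩
      simpa using hx
    exact ⟨(Set.finite_singleton _).subset h,
      by simpa using Set.ncard_le_ncard h (Set.finite_singleton _)⟩
  | succ m ih =>
    have h : words q (m + 1) ⊆ Set.image2 List.cons (Set.Iio q) (words q m) := by
      rintro x ⟨hx, hxq⟩
      cases x with
      | nil => simp at hx
      | cons a x =>
        exact ⟨a, hxq a (by simp), x, ⟨by simpa using hx, fun b hb => hxq b (by simp [hb])⟩, rfl⟩
    have hfin := (Set.finite_Iio q).image2 List.cons ih.1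
    refine ⟨hfin.subset h, (Set.ncard_le_ncard h hfin).trans ?_⟩
    refine (ncard_image2_le_mul _ (Set.finite_Iio q) ih.1).trans ?_
    have hc : (Set.Iio q).ncard = q := by
      rw [← Finset.coe_Iio, Set.ncard_coe_finset, Nat.card_Iio]
    rw [hc, pow_succ']
    exact Nat.mul_le_mul_left _ ih.2

lemma pat_mem_words {q : ℕ} (hq : 2 ≤ q) (t : ℕ) : pat t ∈ words q (2 * t) := by
  refine ⟨by simp [pat]; omega, fun a ha => ?_⟩
  simp only [pat, List.mem_append, List.mem_replicate] at ha
  omega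

/-- Each of the `K` aligned blocks of a pattern-free string avoids one of the `q^(2t)` possible
values. -/
lemma ncard_avoiding_le {q : ℕ} (hq : 2 ≤ q) (t K : ℕ) :
    (avoiding q t (2 * t * K)).Finite ∧
      (avoiding q t (2 * t * K)).ncard ≤ (q ^ (2 * t) - 1) ^ K := by
  induction K with
  | zero =>
    have h : avoiding q t (2 * t * 0) ⊆ {[]} := by
      rintro x ⟨hx, -⟩
      simpa using hx
    exact ⟨(Set.finite_singleton _).subset h,
      by simpa using Set.ncard_le_ncard h (Set.finite_singleton _)⟩
  | succ K ih =>
    obtain ⟨hWfin, hWcard⟩ := words_finite_ncard_le q (2 * t)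
    have hB : (words q (2 * t) \ {pat t}).ncard ≤ q ^ (2 * t) - 1 := by
      rw [Set.ncard_sdiff_singleton_of_mem (pat_mem_words hq t)]
      omega
    have hBfin : (words q (2 * t) \ {pat t}).Finite := hWfin.subset Set.sdiff_subset
    have h : avoiding q t (2 * t * (K + 1)) ⊆
        Set.image2 (· ++ ·) (words q (2 * t) \ {pat t}) (avoiding q t (2 * t * K)) := by
      rintro x ⟨hx, hxq, hxp⟩
      rw [mul_add, mul_one] at hx
      refine ⟨x.take (2 * t), ⟨⟨by simp [hx], fun a ha => hxq a (List.mem_of_mem_take ha)⟩, ?_⟩,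
        x.drop (2 * t), ⟨by simp [hx], fun a ha => hxq a (List.mem_of_mem_drop ha), ?_⟩,
        List.take_append_drop _ _⟩
      · intro h0
        exact hxp ⟨0, by simpa using h0⟩
      · rintro ⟨i, hi⟩
        exact hxp ⟨2 * t + i, by rwa [List.drop_drop] at hi⟩
    have hfin := hBfin.image2 (· ++ ·) ih.1
    refine ⟨hfin.subset h, (Set.ncard_le_ncard h hfin).trans ?_⟩
    refine (ncard_image2_le_mul _ hBfin ih.1).trans ?_
    rw [pow_succ']
    exact Nat.mul_le_mul hB ih.2

lemma log_le_clog_mul_log {b n : ℕ} (hb : 2 ≤ b) (hn : 1 ≤ n) :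
    Real.log n ≤ Nat.clog b n * Real.log b := by
  rw [← Real.log_pow]
  refine Real.log_le_log (by exact_mod_cast hn) ?_
  exact_mod_cast Nat.le_pow_clog (by omega) n

lemma clog_sub_one_mul_log_le {b n : ℕ} (hb : 2 ≤ b) (hn : 2 ≤ n) :
    ((Nat.clog b n : ℝ) - 1) * Real.log b ≤ Real.log n := by
  have h1 : 1 ≤ Nat.clog b n := Nat.clog_pos (by omega) hn
  have h2 : b ^ (Nat.clog b n).pred < n := Nat.pow_pred_clog_lt_self (by omega) (by omega)
  have h3 : (((Nat.clog b n).pred : ℕ) : ℝ) = (Nat.clog b n : ℝ) - 1 := by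
    rw [Nat.pred_eq_sub_one, Nat.cast_sub h1, Nat.cast_one]
  rw [← h3, ← Real.log_pow]
  refine Real.log_le_log (by positivity) ?_
  exact_mod_cast h2.le

/-- The hypothesis on `n` in logarithmic form. -/
lemma log_lower_bound {q t n : ℕ} (hq : 2 ≤ q)
    (hn : (q : ℝ) ^ ((((6 : ℝ) * t + 3) - Real.logb q (Real.exp 1)) / 0.4) ≤ n) :
    (6 * t + 3) * Real.log q - 1 ≤ 0.4 * Real.log n := by
  have hq0 : (0 : ℝ) < q := by positivity
  have hl : 0 < Real.log q := Real.log_pos (by exact_mod_cast hq)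
  have h := Real.log_le_log (by positivity) hn
  rw [Real.log_rpow hq0, Real.logb, Real.log_exp] at h
  have h2 : (6 * (t : ℝ) + 3 - 1 / Real.log q) / 0.4 * Real.log q
      = ((6 * t + 3) * Real.log q - 1) / 0.4 := by
    field_simp
  rw [h2, div_le_iff₀ (by norm_num)] at h
  linarith

lemma exponent_bound {q t n : ℕ} (hq : 2 ≤ q) (ht : 1 ≤ t)
    (hn : (q : ℝ) ^ ((((6 : ℝ) * t + 3) - Real.logb q (Real.exp 1)) / 0.4) ≤ n) :
    ((Nat.clog q n + 6 * t + 2 : ℕ) : ℝ) * Real.log q ≤ Nat.clog 2 n := by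
  have hN := log_lower_bound hq hn
  have ht' : (1 : ℝ) ≤ t := by exact_mod_cast ht
  have hl2 := Real.log_two_gt_d9
  have hl2' := Real.log_two_lt_d9
  have hlq : Real.log 2 ≤ Real.log q := Real.log_le_log (by norm_num) (by exact_mod_cast hq)
  have hNpos : 0 < Real.log n := by nlinarith
  have hn2 : 2 ≤ n := by
    by_contra! hlt
    interval_cases n <;> simp at hNpos
  have hL := log_le_clog_mul_log (b := 2) le_rfl (by omega : 1 ≤ n)
  have hm := clog_sub_one_mul_log_le hq hn2
  push_cast at hL ⊢
  -- `1 / log 2 > 1.4426`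
  have hL' : 1.4426 * Real.log n ≤ Nat.clog 2 n := by
    have : (0 : ℝ) ≤ Nat.clog 2 n := by positivity
    nlinarith
  rcases hq.eq_or_lt with rfl | hq3
  · push_cast at *
    nlinarith
  by_cases hbig : 10.4 ≤ (6 * (t : ℝ) + 3) * Real.log q
  · nlinarith
  have hl3 := Real.log_three_gt_d9
  have hl3' := Real.log_three_lt_d9
  have hlq3 : Real.log 3 ≤ Real.log q := Real.log_le_log (by norm_num) (by exact_mod_cast hq3)
  have ht1 : t = 1 := by
    by_contra hne
    have h2 : (2 : ℝ) ≤ t := by exact_mod_cast (by omega : 2 ≤ t)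
    exact hbig (by nlinarith)
  have hq3' : q = 3 := by
    by_contra hne
    have h4 : Real.log 4 ≤ Real.log q :=
      Real.log_le_log (by norm_num) (by exact_mod_cast (by omega : 4 ≤ q))
    have h4' : Real.log 4 = 2 * Real.log 2 := by
      rw [show (4 : ℝ) = 2 ^ 2 by norm_num, Real.log_pow]
      norm_num
    exact hbig (by nlinarith)
  subst ht1 hq3'
  push_cast at *
  have hn20 : 3 ^ 20 < n := by
    have : Real.log ((3 : ℝ) ^ 20) < Real.log n := by
      rw [Real.log_pow]
      push_cast
      linarith
    have := (Real.log_lt_log_iff (by positivity) (by positivity)).1 this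
    exact_mod_cast this
  have hm21 : 20 < Nat.clog 3 n := (Nat.lt_clog_iff_pow_lt (by norm_num)).2 hn20
  have hL32 : 31 < Nat.clog 2 n :=
    (Nat.lt_clog_iff_pow_lt (by norm_num)).2 (lt_trans (by norm_num) hn20)
  by_cases h22 : 22 ≤ Nat.clog 3 n
  · have : (22 : ℝ) ≤ Nat.clog 3 n := by exact_mod_cast h22
    nlinarith
  · have h21 : Nat.clog 3 n = 21 := by omega
    have : (32 : ℝ) ≤ Nat.clog 2 n := by exact_mod_cast hL32
    rw [h21]
    push_cast
    linarith

/-- Lemma 4: with `δ = 2t·q^{2t}·⌈log₂ n⌉` and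
`n ≥ q^{(6t+3−log_q e)/0.4}`, the set `S` of strings of length `δ` over
`Σ_q` containing no occurrence of `p = 0^t 1^t` has size at most
`q^{δ − ⌈log_q n⌉ − 6t − 2}`; equivalently there is an injection
`g : S → Σ_q^{δ − ⌈log_q n⌉ − 6t − 2}`. -/
theorem pattern_free_strings_compressible
    (q t n : ℕ) (hq : 2 ≤ q) (ht : 1 ≤ t)
    (δ : ℕ) (hδ : δ = 2 * t * q ^ (2 * t) * Nat.clog 2 n)
    (hn : (q : ℝ) ^ ((((6 : ℝ) * t + 3) - Real.logb q (Real.exp 1)) / 0.4) ≤ n) :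
    {x : List ℕ | x.length = δ ∧ (∀ a ∈ x, a < q) ∧
        ¬∃ i, (x.drop i).take (2 * t) = pat t}.ncard
      ≤ q ^ (δ - Nat.clog q n - 6 * t - 2) := by
  have hexp := exponent_bound hq ht hn
  set L := Nat.clog 2 n with hLdef
  set M := Nat.clog q n + 6 * t + 2 with hM
  have hsub : δ - Nat.clog q n - 6 * t - 2 = δ - M := by omega
  rw [hsub]
  have hcard := (ncard_avoiding_le hq t (q ^ (2 * t) * L)).2
  rw [← mul_assoc, ← hδ] at hcard
  refine hcard.trans ?_
  have hQ1 : 1 ≤ q ^ (2 * t) := Nat.one_le_pow _ _ (by omega)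
  have hq0 : (0 : ℝ) < q := by positivity
  -- `M ≤ δ`, so that the subtraction in the exponent does not truncate
  have hMδ : M ≤ δ := by
    have hlq : Real.log 2 ≤ Real.log q := Real.log_le_log (by norm_num) (by exact_mod_cast hq)
    have h1 : (M : ℝ) ≤ 2 * L := by
      have := Real.log_two_gt_d9
      have : (0 : ℝ) ≤ M := by positivity
      nlinarith
    have h2 : M ≤ 2 * L := by exact_mod_cast h1
    refine h2.trans ?_
    rw [hδ]
    exact Nat.mul_le_mul_right _ (by nlinarith)
  have hqM : (q : ℝ) ^ M ≤ Real.exp L := by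
    rw [← Real.exp_log (pow_pos hq0 M), Real.log_pow]
    exact Real.exp_le_exp.2 hexp
  set Q := q ^ (2 * t) with hQ
  have hQr : (0 : ℝ) < Q := by exact_mod_cast hQ1
  have hbase : ((Q : ℝ) - 1) ^ Q ≤ (Q : ℝ) ^ Q * Real.exp (-1) := by
    have h1 : (Q : ℝ) - 1 ≤ Q * Real.exp (-(1 / Q)) := by
      have h := Real.add_one_le_exp (-(1 / (Q : ℝ)))
      calc (Q : ℝ) - 1 = Q * (-(1 / Q) + 1) := by field_simp; ring
        _ ≤ _ := by gcongr
    have h0 : (0 : ℝ) ≤ (Q : ℝ) - 1 := by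
      have : (1 : ℝ) ≤ Q := by exact_mod_cast hQ1
      linarith
    calc ((Q : ℝ) - 1) ^ Q ≤ (Q * Real.exp (-(1 / Q))) ^ Q := pow_le_pow_left₀ h0 h1 _
      _ = (Q : ℝ) ^ Q * Real.exp (-1) := by
        rw [mul_pow, ← Real.exp_nat_mul]
        congr 2
        field_simp
  have hδQ : (q : ℝ) ^ δ = ((Q : ℝ) ^ Q) ^ L := by
    rw [hδ, mul_assoc, pow_mul, pow_mul, hQ]
    push_cast
    rfl
  have h0 : (0 : ℝ) ≤ (Q : ℝ) - 1 := by
    have : (1 : ℝ) ≤ Q := by exact_mod_cast hQ1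
    linarith
  have hmain : ((Q : ℝ) - 1) ^ (Q * L) * (q : ℝ) ^ M ≤ (q : ℝ) ^ (δ - M) * (q : ℝ) ^ M := by
    rw [← pow_add, Nat.sub_add_cancel hMδ, hδQ, pow_mul]
    calc (((Q : ℝ) - 1) ^ Q) ^ L * (q : ℝ) ^ M
        ≤ ((Q : ℝ) ^ Q * Real.exp (-1)) ^ L * Real.exp L := by gcongr
      _ = ((Q : ℝ) ^ Q) ^ L := by
        rw [mul_pow, ← Real.exp_nat_mul, mul_assoc, ← Real.exp_add]
        simp
  have hfin := le_of_mul_le_mul_right hmain (pow_pos hq0 M)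
  have hcast : (((Q - 1) ^ (Q * L) : ℕ) : ℝ) ≤ ((q ^ (δ - M) : ℕ) : ℝ) := by
    push_cast [Nat.cast_sub hQ1]
    exact hfin
  exact_mod_cast hcast
end

section
/- Let q ≥ 2, t ≥ 1, δ = 2t·q^{2t}·⌈log_2 n⌉, and suppose n ≥ q^{(6t+3−log_q e)/0.4}. Then there exists an injective function EncDen : Σ_q^{n−1} → Σ_q^n such that for every u ∈ Σ_q^{n−1}, the string EncDen(u) is (p,δ)-dense. Equivalently, the number of (p,δ)-dense strings in Σ_q^n is at least q^{n−1}. -/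
/-- If `f` lists `M` disjoint blocks of `T` coordinates, the words whose blocks all differ from
`p` make up a fraction of at most `((q ^ T - 1) / q ^ T) ^ M` of all words. -/
lemma card_avoid_mul_le {q n M T : ℕ} (f : Fin M × Fin T → Fin n) (hf : Function.Injective f)
    (p : Fin T → Fin q) :
    Fintype.card {x : Fin n → Fin q // ∀ k, (fun j => x (f (k, j))) ≠ p} * (q ^ T) ^ M
      ≤ (q ^ T - 1) ^ M * q ^ n := by
  classical
  -- A word is determined by its blocks together with its restriction off the range of `f`.
  let F : {x : Fin n → Fin q // ∀ k, (fun j => x (f (k, j))) ≠ p} →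
      (Fin M → {w : Fin T → Fin q // w ≠ p}) × ({i : Fin n // i ∉ Set.range f} → Fin q) :=
    fun x => (fun k => ⟨fun j => x.1 (f (k, j)), x.2 k⟩, fun i => x.1 i.1)
  have hF : Function.Injective F := by
    intro x y hxy
    obtain ⟨h1, h2⟩ := Prod.ext_iff.mp hxy
    apply Subtype.ext
    funext i
    by_cases hi : i ∈ Set.range f
    · obtain ⟨⟨k, j⟩, rfl⟩ := hi
      exact congrFun (congrArg Subtype.val (congrFun h1 k)) j
    · exact congrFun h2 ⟨i, hi⟩
  have hrest : Fintype.card {i : Fin n // i ∉ Set.range f} = n - M * T := by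
    rw [Fintype.card_subtype_compl, Fintype.card_fin]
    congr 1
    rw [← Fintype.card_congr (Equiv.ofInjective f hf)]
    simp
  have hMT : M * T ≤ n := by simpa using Fintype.card_le_of_injective f hf
  have hw : Fintype.card {w : Fin T → Fin q // w ≠ p} = q ^ T - 1 := by
    rw [Fintype.card_subtype_compl]
    simp
  have hcard := Fintype.card_le_of_injective F hF
  rw [Fintype.card_prod, Fintype.card_fun, Fintype.card_fun, hw, hrest, Fintype.card_fin,
    Fintype.card_fin] at hcard
  calc _ ≤ ((q ^ T - 1) ^ M * q ^ (n - M * T)) * (q ^ T) ^ M := Nat.mul_le_mul_right _ hcard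
    _ = (q ^ T - 1) ^ M * q ^ n := by
      rw [mul_assoc, ← pow_mul, mul_comm T M, ← pow_add, Nat.sub_add_cancel hMT]

/-- The numerical heart of the union bound: `n (1 - 1/N) ^ (N L) ≤ (2/e) ^ L ≤ 1/2`. -/
lemma two_mul_pow_le {N L n : ℕ} (hN : 1 ≤ N) (hL : 3 ≤ L) (hn : n ≤ 2 ^ L) :
    2 * n * (N - 1) ^ (N * L) ≤ N ^ (N * L) := by
  have hN0 : (0 : ℝ) < N := by exact_mod_cast hN
  have hN1 : (1 : ℝ) ≤ N := by exact_mod_cast hN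
  have h1 : ((N : ℝ) - 1) ^ N * Real.exp 1 ≤ (N : ℝ) ^ N := by
    have h := Real.one_sub_le_exp_neg (1 / (N : ℝ))
    have h0 : (0 : ℝ) ≤ 1 - 1 / N := by
      rw [sub_nonneg, div_le_one hN0]; exact hN1
    have h2 : (1 - 1 / (N : ℝ)) ^ N ≤ Real.exp (-1) := by
      calc _ ≤ Real.exp (-(1 / (N : ℝ))) ^ N := pow_le_pow_left₀ h0 h N
        _ = Real.exp (-1) := by
          rw [← Real.exp_nat_mul]; congr 1; field_simp
    have h3 : ((N : ℝ) - 1) ^ N = N ^ N * (1 - 1 / (N : ℝ)) ^ N := by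
      rw [← mul_pow]; congr 1; field_simp
    calc ((N : ℝ) - 1) ^ N * Real.exp 1 = N ^ N * ((1 - 1 / (N : ℝ)) ^ N * Real.exp 1) := by
          rw [h3, mul_assoc]
      _ ≤ N ^ N * (Real.exp (-1) * Real.exp 1) := by gcongr
      _ = N ^ N := by rw [← Real.exp_add]; simp
  have h2 : (2 : ℝ) * 2 ^ L ≤ Real.exp 1 ^ L := by
    obtain ⟨m, rfl⟩ := Nat.exists_eq_add_of_le hL
    have he := Real.exp_one_gt_d9
    rw [pow_add, pow_add, ← mul_assoc]
    have h3 : (2 : ℝ) * 2 ^ 3 ≤ Real.exp 1 ^ 3 :=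
      calc (2 : ℝ) * 2 ^ 3 ≤ 2.7 ^ 3 := by norm_num
        _ ≤ _ := by gcongr; linarith
    have h4 : (2 : ℝ) ^ m ≤ Real.exp 1 ^ m := by gcongr; linarith
    gcongr
  have h3 : (2 : ℝ) * n * ((N : ℝ) - 1) ^ (N * L) ≤ (N : ℝ) ^ (N * L) := by
    have hnn : (0 : ℝ) ≤ (N : ℝ) - 1 := by linarith
    have hn' : (n : ℝ) ≤ 2 ^ L := by exact_mod_cast hn
    calc (2 : ℝ) * n * ((N : ℝ) - 1) ^ (N * L)
        ≤ (2 * 2 ^ L) * ((N : ℝ) - 1) ^ (N * L) := by gcongr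
      _ ≤ Real.exp 1 ^ L * ((N : ℝ) - 1) ^ (N * L) := by gcongr
      _ = (((N : ℝ) - 1) ^ N * Real.exp 1) ^ L := by rw [pow_mul, mul_pow]; ring
      _ ≤ ((N : ℝ) ^ N) ^ L := by gcongr
      _ = _ := by rw [pow_mul]
  have h4 : ((N - 1 : ℕ) : ℝ) = (N : ℝ) - 1 := by push_cast [hN]; ring
  rw [← h4] at h3
  exact_mod_cast h3

/-- Union bound over a family of at most `n` windows, each made of `M` disjoint blocks: if words
avoiding `p` on a fixed window have density at most `1 / (2n)`, then at least `q ^ (n - 1)` words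
have a block equal to `p` in every window. -/
lemma card_good_ge {q n M T W : ℕ} (hq : 2 ≤ q) (hn : 1 ≤ n) (hW : W ≤ n)
    (f : Fin W → Fin M × Fin T → Fin n) (hf : ∀ a, Function.Injective (f a))
    (p : Fin T → Fin q) (hnum : 2 * n * (q ^ T - 1) ^ M ≤ (q ^ T) ^ M) :
    q ^ (n - 1) ≤
      Fintype.card {x : Fin n → Fin q // ∀ a, ∃ k, (fun j => x (f a (k, j))) = p} := by
  classical
  have hcompl := Fintype.card_subtype_compl
    (fun x : Fin n → Fin q => ∀ a, ∃ k, (fun j => x (f a (k, j))) = p)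
  have hle := Fintype.card_subtype_le
    (fun x : Fin n → Fin q => ∀ a, ∃ k, (fun j => x (f a (k, j))) = p)
  set G := Fintype.card {x : Fin n → Fin q // ∀ a, ∃ k, (fun j => x (f a (k, j))) = p}
  set B := Fintype.card
    {x : Fin n → Fin q // ¬ ∀ a, ∃ k, (fun j => x (f a (k, j))) = p} with hB
  have htot : Fintype.card (Fin n → Fin q) = q ^ n := by simp
  have hbad : B ≤ ∑ a, Fintype.card
      {x : Fin n → Fin q // ∀ k, (fun j => x (f a (k, j))) ≠ p} := by
    rw [hB]
    simp only [Fintype.card_subtype]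
    refine le_trans (Finset.card_le_card ?_) Finset.card_biUnion_le
    intro x hx
    simpa using hx
  have hbad2 : B * (q ^ T) ^ M ≤ n * ((q ^ T - 1) ^ M * q ^ n) := by
    calc B * (q ^ T) ^ M ≤ _ := Nat.mul_le_mul_right _ hbad
      _ ≤ ∑ _a : Fin W, (q ^ T - 1) ^ M * q ^ n := by
        rw [Finset.sum_mul]
        exact Finset.sum_le_sum fun a _ => card_avoid_mul_le (f a) (hf a) p
      _ = W * ((q ^ T - 1) ^ M * q ^ n) := by simp
      _ ≤ _ := Nat.mul_le_mul_right _ hW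
  have hpos : 0 < (q ^ T) ^ M := by positivity
  have h2B : 2 * B ≤ q ^ n := by
    refine Nat.le_of_mul_le_mul_right ?_ hpos
    calc 2 * B * (q ^ T) ^ M = 2 * (B * (q ^ T) ^ M) := by ring
      _ ≤ 2 * (n * ((q ^ T - 1) ^ M * q ^ n)) := Nat.mul_le_mul_left _ hbad2
      _ = (2 * n * (q ^ T - 1) ^ M) * q ^ n := by ring
      _ ≤ (q ^ T) ^ M * q ^ n := Nat.mul_le_mul_right _ hnum
      _ = _ := mul_comm _ _
  have hqn : 2 * q ^ (n - 1) ≤ q ^ n := by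
    obtain ⟨m, rfl⟩ := Nat.exists_eq_add_of_le' hn
    rw [Nat.add_sub_cancel, pow_succ, mul_comm]
    exact Nat.mul_le_mul_left _ hq
  omega

lemma three_le_clog {q t n : ℕ} (hq : 2 ≤ q) (ht : 1 ≤ t)
    (hn : (q : ℝ) ^ ((((6 : ℝ) * t + 3) - Real.logb q (Real.exp 1)) / 0.4) ≤ n) :
    3 ≤ Nat.clog 2 n := by
  have hq' : (2 : ℝ) ≤ q := by exact_mod_cast hq
  have ht' : (1 : ℝ) ≤ t := by exact_mod_cast ht
  -- Since `e ≤ 4 ≤ q ^ 2`, the exponent is at least `(9 - 2) / 0.4 ≥ 3`.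
  have hlog : Real.logb q (Real.exp 1) ≤ 2 := by
    rw [Real.logb_le_iff_le_rpow (by linarith) (Real.exp_pos 1)]
    have he := Real.exp_one_lt_d9
    have : (q : ℝ) ^ (2 : ℝ) = q ^ 2 := by norm_cast
    rw [this]
    nlinarith
  have hexp : (3 : ℝ) ≤ (((6 : ℝ) * t + 3) - Real.logb q (Real.exp 1)) / 0.4 := by
    rw [le_div_iff₀ (by norm_num)]
    linarith
  have h8 : (8 : ℝ) ≤ n := by
    calc (8 : ℝ) = 2 ^ (3 : ℝ) := by norm_num
      _ ≤ (q : ℝ) ^ (3 : ℝ) := by gcongr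
      _ ≤ _ := Real.rpow_le_rpow_of_exponent_le (by linarith) hexp
      _ ≤ n := hn
  have h8' : 8 ≤ n := by exact_mod_cast h8
  calc 3 = Nat.clog 2 (2 ^ 3) := (Nat.clog_pow 2 3 (by norm_num)).symm
    _ ≤ _ := Nat.clog_mono_right 2 h8'

/-- Lemma 5: with `δ = 2t·q^{2t}·⌈log₂ n⌉` and
`n ≥ q^{(6t+3−log_q e)/0.4}`, there is an injective encoder
`EncDen : Σ_q^{n−1} → Σ_q^n` whose image consists of `(p,δ)`-dense strings.
In particular there are at least `q^{n-1}` `(p,δ)`-dense strings in `Σ_q^n`. -/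
theorem exists_dense_encoder
    (q t n : ℕ) (hq : 2 ≤ q) (ht : 1 ≤ t)
    (δ : ℕ) (hδ : δ = 2 * t * q ^ (2 * t) * Nat.clog 2 n)
    (hn : (q : ℝ) ^ ((((6 : ℝ) * t + 3) - Real.logb q (Real.exp 1)) / 0.4) ≤ n) :
    ∃ EncDen : List ℕ → List ℕ,
      (∀ u : List ℕ, u.length = n - 1 → (∀ a ∈ u, a < q) →
        (EncDen u).length = n ∧ (∀ a ∈ EncDen u, a < q) ∧
          pdense t δ (EncDen u)) ∧
      (∀ u u' : List ℕ, u.length = n - 1 → (∀ a ∈ u, a < q) →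
        u'.length = n - 1 → (∀ a ∈ u', a < q) →
        EncDen u = EncDen u' → u = u') := by
  classical
  have hL := three_le_clog hq ht hn
  have hnL : n ≤ 2 ^ Nat.clog 2 n := Nat.le_pow_clog (by norm_num) n
  have hn1 : 1 ≤ n := by
    rcases Nat.eq_zero_or_pos n with rfl | h
    · simp at hL
    · exact h
  have hNpos : 0 < q ^ (2 * t) := by positivity
  set M := q ^ (2 * t) * Nat.clog 2 n with hM
  have hδM : δ = 2 * t * M := by rw [hδ, hM, mul_assoc]
  have hδ1 : 1 ≤ δ := by
    rw [hδM]
    exact Nat.mul_pos (by omega) (Nat.mul_pos hNpos (by omega))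
  -- Block `k` of a window ends inside that window.
  have hblock : ∀ k : Fin M, 2 * t * k + 2 * t ≤ δ := by
    intro k
    rw [hδM, ← Nat.mul_succ]
    exact Nat.mul_le_mul_left _ k.2
  let f : Fin (n + 1 - δ) → Fin M × Fin (2 * t) → Fin n := fun a kj =>
    ⟨a + 2 * t * kj.1 + kj.2, by
      have h1 := hblock kj.1
      have h2 := kj.2.2
      have h3 := a.2
      omega⟩
  have hf : ∀ a, Function.Injective (f a) := by
    rintro a ⟨k, j⟩ ⟨k', j'⟩ h
    have h : (a : ℕ) + 2 * t * k + j = a + 2 * t * k' + j' := congrArg Fin.val h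
    have h' : (j : ℕ) + 2 * t * k = j' + 2 * t * k' := by omega
    have hk : (k : ℕ) = k' := by
      have := congrArg (· / (2 * t)) h'
      simpa [Nat.add_mul_div_left _ _ (show 0 < 2 * t by omega), Nat.div_eq_of_lt j.2,
        Nat.div_eq_of_lt j'.2] using this
    have hj : (j : ℕ) = j' := by rw [hk] at h'; omega
    exact Prod.ext (Fin.ext hk) (Fin.ext hj)
  let p : Fin (2 * t) → Fin q := fun j => if (j : ℕ) < t then ⟨0, by omega⟩ else ⟨1, by omega⟩
  have hcard := card_good_ge hq hn1 (show n + 1 - δ ≤ n by omega) f hf p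
    (two_mul_pow_le hNpos hL hnL)
  obtain ⟨e⟩ : Nonempty ((Fin (n - 1) → Fin q) ↪
      {x : Fin n → Fin q // ∀ a, ∃ k, (fun j => x (f a (k, j))) = p}) := by
    apply Function.Embedding.nonempty_of_card_le
    simpa using hcard
  let toFun : (u : List ℕ) → (u.length = n - 1 ∧ ∀ a ∈ u, a < q) → Fin (n - 1) → Fin q :=
    fun u h i => ⟨u[(i : ℕ)]'(by rw [h.1]; exact i.2), h.2 _ (List.getElem_mem _)⟩
  refine ⟨fun u => if h : u.length = n - 1 ∧ ∀ a ∈ u, a < q then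
    List.ofFn (fun i => ((e (toFun u h)).1 i : ℕ)) else [], ?_, ?_⟩
  · intro u h1 h2
    simp only [dif_pos (And.intro h1 h2)]
    generalize e (toFun u ⟨h1, h2⟩) = x
    refine ⟨by simp, ?_, ?_⟩
    · intro a ha
      obtain ⟨i, rfl⟩ := List.mem_ofFn.mp ha
      exact (x.1 i).2
    · intro a ha
      rw [List.length_ofFn] at ha
      obtain ⟨k, hk⟩ := x.2 ⟨a, by omega⟩
      have hbk := hblock k
      refine ⟨a + 2 * t * k, by omega, by omega, ?_⟩
      apply List.ext_getElem
      · simp [pat]; omega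
      · intro j hj1 hj2
        have hj : j < 2 * t := by simp at hj1; omega
        have hkj := congrArg Fin.val (congrFun hk ⟨j, hj⟩)
        rw [List.getElem_take, List.getElem_drop, List.getElem_ofFn]
        refine hkj.trans ?_
        by_cases hjt : j < t <;> simp [p, pat, hjt, List.getElem_append]
  · intro u u' h1 h2 h1' h2' h
    simp only [dif_pos (And.intro h1 h2), dif_pos (And.intro h1' h2')] at h
    have hx := List.ofFn_injective h
    have he : toFun u ⟨h1, h2⟩ = toFun u' ⟨h1', h2'⟩ := by
      apply e.injective
      apply Subtype.ext
      funext i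
      exact Fin.ext (congrFun hx i)
    apply List.ext_getElem (h1.trans h1'.symm)
    intro i hi hi'
    exact congrArg Fin.val (congrFun he ⟨i, by omega⟩)
end

section
/- Fix integers q > 2, t ≥ 1, and a real ε > 0, and let δ = δ(n) = 2t·q^{2t}·⌈log_2 n⌉. There exists n_0 such that for every n ≥ n_0 there is a function f : Σ_q^n → {0, 1, …, N−1} with log_2 N ≤ log_2 n + (8+ε)·log_2 log_2 n, such that for all (p,δ)-dense x, x' ∈ Σ_q^n with f(x) = f(x') and B_{≤t}(x) ∩ B_{≤t}(x') ≠ ∅, one has x = x'. (Equivalently, any (p,δ)-dense x ∈ Σ_q^n can be uniquely recovered from the sketch f(x), of at most log_2 n + 8·log_2 log_2 n + o(log_2 log_2 n) + γ_{q,t} bits, and any y ∈ B_{≤t}(x).) -/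
/-! ### Counts and position sums of 0-1 sequences -/

/-- On an interval of length at most `s` around `c`, a 0-1 sequence has total at most `s`, and
each of its ones may be moved to position `c` at a total cost of at most `s²`. -/
theorem short_sum (w : ℕ → ℤ) (h0 : ∀ j, 0 ≤ w j) (h1 : ∀ j, w j ≤ 1) (lo hi c s : ℕ)
    (hlen : hi ≤ lo + s) (hlo : c ≤ lo + s) (hhi : hi ≤ c + s + 1) :
    0 ≤ ∑ j ∈ Finset.Ico lo hi, w j ∧ ∑ j ∈ Finset.Ico lo hi, w j ≤ s ∧
    |∑ j ∈ Finset.Ico lo hi, (j : ℤ) * w j - c * ∑ j ∈ Finset.Ico lo hi, w j| ≤ s * s := by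
  have hcard : ((Finset.Ico lo hi).card : ℤ) ≤ s := by
    rw [Nat.card_Ico]; omega
  refine ⟨Finset.sum_nonneg fun j _ => h0 j, ?_, ?_⟩
  · calc ∑ j ∈ Finset.Ico lo hi, w j ≤ (Finset.Ico lo hi).card • (1 : ℤ) :=
          Finset.sum_le_card_nsmul _ _ _ fun j _ => h1 j
      _ ≤ s := by simpa using hcard
  · rw [Finset.mul_sum, ← Finset.sum_sub_distrib]
    refine (Finset.abs_sum_le_sum_abs _ _).trans ?_
    calc ∑ j ∈ Finset.Ico lo hi, |(j : ℤ) * w j - c * w j|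
        ≤ (Finset.Ico lo hi).card • (s : ℤ) := by
          refine Finset.sum_le_card_nsmul _ _ _ fun j hj => ?_
          rw [Finset.mem_Ico] at hj
          rw [← sub_mul, abs_mul, abs_of_nonneg (h0 j)]
          have hjc : |(j : ℤ) - c| ≤ s := by rw [abs_le]; omega
          nlinarith [h0 j, h1 j, abs_nonneg ((j : ℤ) - c)]
      _ ≤ s * s := by
          rw [nsmul_eq_mul]; gcongr

/-- Let `w` and `w'` be the indicators of the occurrences of a word of length `2t` in `P u M S`
and `P M u' S`, with `|P| = i`, `|P M| = i'` and `|u| = |u'| = τ`. Occurrences inside `P` and `S`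
agree and those inside `M` are shifted by `τ`. The remaining ones lie near `i` (`A` and `A'` of
them) or near `i'` (`B` and `B'` of them), and treating them as located exactly at `i` or `i'`
costs an error `E`. -/
theorem moment_diff (w w' : ℕ → ℤ) (t τ n i i' : ℕ)
    (h0 : ∀ j, 0 ≤ w j) (h1 : ∀ j, w j ≤ 1) (h0' : ∀ j, 0 ≤ w' j) (h1' : ∀ j, w' j ≤ 1)
    (ht : 1 ≤ t) (hτt : τ ≤ t) (hii : i + 2 * t ≤ i') (hn : i' + τ ≤ n)
    (hL : ∀ j, j + 2 * t ≤ i → w j = w' j)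
    (hM : ∀ j, i ≤ j → j + 2 * t ≤ i' → w (j + τ) = w' j)
    (hR : ∀ j, i' + τ ≤ j → w j = w' j) :
    ∃ A A' B B' E : ℤ, (0 ≤ A ∧ A ≤ 3 * t) ∧ (0 ≤ A' ∧ A' ≤ 3 * t) ∧ (0 ≤ B ∧ B ≤ 3 * t) ∧
      (0 ≤ B' ∧ B' ≤ 3 * t) ∧ |E| ≤ 36 * t * t ∧
      ∑ j ∈ Finset.range n, w j - ∑ j ∈ Finset.range n, w' j = A + B - A' - B' ∧
      ∑ j ∈ Finset.range n, (j : ℤ) * w j - ∑ j ∈ Finset.range n, (j : ℤ) * w' j =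
        τ * ∑ j ∈ Finset.Ico i (i' + 1 - 2 * t), w' j + (A - A') * i + (B - B') * i' + E := by
  -- cut `[0, n)` at the ends of the region of occurrences meeting each junction
  have split : ∀ (g : ℕ → ℤ) (a b c d : ℕ), a ≤ b → b ≤ c → c ≤ d → d ≤ n →
      ∑ j ∈ Finset.range n, g j = ∑ j ∈ Finset.Ico 0 a, g j + ∑ j ∈ Finset.Ico a b, g j +
        ∑ j ∈ Finset.Ico b c, g j + ∑ j ∈ Finset.Ico c d, g j + ∑ j ∈ Finset.Ico d n, g j := by
    intro g a b c d hab hbc hcd hdn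
    rw [Finset.range_eq_Ico, Finset.sum_Ico_consecutive _ (by omega) hab,
      Finset.sum_Ico_consecutive _ (by omega) hbc, Finset.sum_Ico_consecutive _ (by omega) hcd,
      Finset.sum_Ico_consecutive _ (by omega) hdn]
  have S := fun g => split g (i + 1 - 2 * t) (i + τ) (i' + τ + 1 - 2 * t) (i' + τ)
    (by omega) (by omega) (by omega) hn
  have S' := fun g => split g (i + 1 - 2 * t) i (i' + 1 - 2 * t) (i' + τ)
    (by omega) (by omega) (by omega) hn
  have headEq : ∀ φ : ℕ → ℤ, ∑ j ∈ Finset.Ico 0 (i + 1 - 2 * t), φ j * w j =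
      ∑ j ∈ Finset.Ico 0 (i + 1 - 2 * t), φ j * w' j := fun φ =>
    Finset.sum_congr rfl fun j hj => by
      rw [Finset.mem_Ico] at hj; rw [hL j (by omega)]
  have tailEq : ∀ φ : ℕ → ℤ, ∑ j ∈ Finset.Ico (i' + τ) n, φ j * w j =
      ∑ j ∈ Finset.Ico (i' + τ) n, φ j * w' j := fun φ =>
    Finset.sum_congr rfl fun j hj => by
      rw [Finset.mem_Ico] at hj; rw [hR j (by omega)]
  have midEq : ∀ φ : ℕ → ℤ, ∑ j ∈ Finset.Ico (i + τ) (i' + τ + 1 - 2 * t), φ j * w j =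
      ∑ j ∈ Finset.Ico i (i' + 1 - 2 * t), φ (j + τ) * w' j := fun φ => by
    rw [show i' + τ + 1 - 2 * t = i' + 1 - 2 * t + τ by omega, ← Finset.sum_Ico_add']
    refine Finset.sum_congr rfl fun j hj => ?_
    rw [Finset.mem_Ico] at hj; rw [hM j (by omega) (by omega)]
  have mid1 : ∑ j ∈ Finset.Ico i (i' + 1 - 2 * t), ((j + τ : ℕ) : ℤ) * w' j =
      ∑ j ∈ Finset.Ico i (i' + 1 - 2 * t), (j : ℤ) * w' j +
        τ * ∑ j ∈ Finset.Ico i (i' + 1 - 2 * t), w' j := by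
    rw [Finset.mul_sum, ← Finset.sum_add_distrib]
    exact Finset.sum_congr rfl fun j _ => by push_cast; ring
  obtain ⟨a0, a1, a2⟩ := short_sum w h0 h1 (i + 1 - 2 * t) (i + τ) i (3 * t)
    (by omega) (by omega) (by omega)
  obtain ⟨b0, b1, b2⟩ := short_sum w h0 h1 (i' + τ + 1 - 2 * t) (i' + τ) i' (3 * t)
    (by omega) (by omega) (by omega)
  obtain ⟨a0', a1', a2'⟩ := short_sum w' h0' h1' (i + 1 - 2 * t) i i (3 * t)
    (by omega) (by omega) (by omega)
  obtain ⟨b0', b1', b2'⟩ := short_sum w' h0' h1' (i' + 1 - 2 * t) (i' + τ) i' (3 * t)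
    (by omega) (by omega) (by omega)
  push_cast at a1 b1 a1' b1' a2 b2 a2' b2'
  have K := S w
  have K' := S' w'
  have F := S fun j => (j : ℤ) * w j
  have F' := S' fun j => (j : ℤ) * w' j
  have k1 := headEq fun _ => 1
  have k2 := midEq fun _ => 1
  have k3 := tailEq fun _ => 1
  have f1 := headEq fun j => (j : ℤ)
  have f2 := midEq fun j => (j : ℤ)
  have f3 := tailEq fun j => (j : ℤ)
  simp only [one_mul] at k1 k2 k3
  rw [mid1] at f2
  refine ⟨_, _, _, _, _, ⟨a0, a1⟩, ⟨a0', a1'⟩, ⟨b0, b1⟩, ⟨b0', b1'⟩, ?_, ?_,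
    sub_eq_iff_eq_add'.mp rfl⟩
  · rw [F, F', f1, f2, f3]
    rw [abs_le] at *
    constructor <;> linarith
  · rw [K, K', k1, k2, k3]; ring

/-- Windows of length `s` starting at points of `P` are disjoint, so at most `(b - a) / s` of them
fit into `[a, b)`. -/
theorem sum_le_of_spaced (P : ℕ → Prop) [DecidablePred P] (s a b : ℕ)
    (hP : ∀ j k, P j → P k → j < k → j + s ≤ k) :
    (s : ℤ) * ∑ j ∈ Finset.Ico a (b + 1 - s), (if P j then (1 : ℤ) else 0) ≤ (b - a : ℕ) := by
  rw [Finset.sum_boole]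
  have hd : (((Finset.Ico a (b + 1 - s)).filter P : Finset ℕ) : Set ℕ).PairwiseDisjoint
      (fun j => Finset.Ico j (j + s)) := by
    intro j hj k hk hjk
    simp only [Finset.coe_filter, Set.mem_ofPred_eq] at hj hk
    simp only [Function.onFun, Finset.disjoint_left, Finset.mem_Ico]
    intro r hr hr'
    rcases lt_or_gt_of_ne hjk with h | h
    · have := hP j k hj.2 hk.2 h; omega
    · have := hP k j hk.2 hj.2 h; omega
  have hsub : ((Finset.Ico a (b + 1 - s)).filter P).biUnion (fun j => Finset.Ico j (j + s)) ⊆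
      Finset.Ico a b := by
    intro r hr
    simp only [Finset.mem_biUnion, Finset.mem_filter, Finset.mem_Ico] at hr ⊢
    omega
  have hc := Finset.card_le_card hsub
  rw [Finset.card_biUnion hd] at hc
  simp only [Nat.card_Ico, add_tsub_cancel_left, Finset.sum_const, smul_eq_mul] at hc
  rw [mul_comm]
  exact_mod_cast hc

/-- Each of the `h` consecutive windows of length `δ` in `[a, b)` contributes its own point of `P`. -/
theorem le_sum_of_dense (P : ℕ → Prop) [DecidablePred P] (s δ h a b : ℕ)
    (hs : 1 ≤ s) (hb : a + h * δ ≤ b)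
    (hP : ∀ c, a ≤ c → c + δ ≤ b → ∃ j, c ≤ j ∧ j + s ≤ c + δ ∧ P j) :
    (h : ℤ) ≤ ∑ j ∈ Finset.Ico a (b + 1 - s), (if P j then (1 : ℤ) else 0) := by
  rw [Finset.sum_boole]
  have key : ∀ c : ℕ, ∃ j, c < h → a + c * δ ≤ j ∧ j + s ≤ a + c * δ + δ ∧ P j := by
    intro c
    by_cases hc : c < h
    · have : (c + 1) * δ ≤ h * δ := Nat.mul_le_mul_right _ hc
      obtain ⟨j, hj⟩ := hP (a + c * δ) (by omega) (by linarith)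
      exact ⟨j, fun _ => hj⟩
    · exact ⟨0, fun h => absurd h hc⟩
  choose g hg using key
  have : (Finset.range h).card ≤ ((Finset.Ico a (b + 1 - s)).filter P).card := by
    refine Finset.card_le_card_of_injOn g ?_ ?_
    · intro c hc
      have hc : c < h := by simpa using hc
      obtain ⟨h1, h2, h3⟩ := hg c hc
      have : (c + 1) * δ ≤ h * δ := Nat.mul_le_mul_right _ hc
      have : (c + 1) * δ = c * δ + δ := by ring
      simp only [Finset.coe_filter, Set.mem_ofPred_eq, Finset.mem_Ico]
      refine ⟨⟨by omega, by omega⟩, h3⟩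
    · intro c hc d hd hcd
      have hc : c < h := by simpa using hc
      have hd : d < h := by simpa using hd
      have h1 := hg c hc
      have h2 := hg d hd
      rw [← hcd] at h2
      by_contra hne
      rcases lt_or_gt_of_ne hne with h | h
      · have : (c + 1) * δ ≤ d * δ := Nat.mul_le_mul_right _ h
        have : (c + 1) * δ = c * δ + δ := by ring
        omega
      · have : (d + 1) * δ ≤ c * δ := Nat.mul_le_mul_right _ h
        have : (d + 1) * δ = d * δ + δ := by ring
        omega
  rw [Finset.card_range] at this
  exact_mod_cast this

/-! ### Pairs of strings with a common burst deletion -/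

/-- `x = P u M S` and `y = P M u' S` with `|P| = i`, `|M| = i' - i` and `|u| = |u'| = τ ≤ t`,
expressed entrywise. -/
structure Shift (t i i' τ : ℕ) (x y : List ℕ) : Prop where
  len : x.length = y.length
  le : i ≤ i'
  le_t : τ ≤ t
  bound : i' + τ ≤ x.length
  pre : ∀ j, j < i → x[j]? = y[j]?
  mid : ∀ j, i ≤ j → j < i' → x[j + τ]? = y[j]?
  post : ∀ j, i' + τ ≤ j → x[j]? = y[j]?

/-- Two strings of equal length with a common burst deletion form a shift; which one comes first
depends on which deletion is further to the left. -/
theorem shift_of_burst {t : ℕ} {x x' : List ℕ} (hlen : x.length = x'.length)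
    (h : (burstLe t x ∩ burstLe t x').Nonempty) :
    ∃ i i' τ, Shift t i i' τ x x' ∨ Shift t i i' τ x' x := by
  obtain ⟨y, ⟨τ, hτ, i, hi, hy⟩, ⟨τ', hτ', i', hi', hy'⟩⟩ := h
  have e : τ = τ' := by
    have h1 := congrArg List.length hy
    have h2 := congrArg List.length hy'
    simp only [List.length_append, List.length_take, List.length_drop] at h1 h2
    omega
  subst e
  have g : ∀ j, y[j]? = if j < i then x[j]? else x[j + τ]? := by
    intro j
    rw [hy, List.getElem?_append, List.length_take, min_eq_left (by omega)]
    split_ifs with hj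
    · rw [List.getElem?_take_of_lt hj]
    · rw [List.getElem?_drop]; congr 1; omega
  have g' : ∀ j, y[j]? = if j < i' then x'[j]? else x'[j + τ]? := by
    intro j
    rw [hy', List.getElem?_append, List.length_take, min_eq_left (by omega)]
    split_ifs with hj
    · rw [List.getElem?_take_of_lt hj]
    · rw [List.getElem?_drop]; congr 1; omega
  have post : ∀ j, i + τ ≤ j → i' + τ ≤ j → x[j]? = x'[j]? := by
    intro j h1 h2
    have e1 := g (j - τ)
    have e2 := g' (j - τ)
    rw [if_neg (by omega), show j - τ + τ = j by omega] at e1 e2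
    rw [← e1, e2]
  rcases le_total i i' with h | h
  · refine ⟨i, i', τ, Or.inl ⟨hlen, h, hτ, by omega, ?_, ?_, ?_⟩⟩
    · intro j hj
      have e1 := g j
      have e2 := g' j
      rw [if_pos (by omega)] at e1 e2
      rw [← e1, e2]
    · intro j h1 h2
      have e1 := g j
      have e2 := g' j
      rw [if_neg (by omega)] at e1
      rw [if_pos (by omega)] at e2
      rw [← e1, e2]
    · intro j hj
      exact post j (by omega) hj
  · refine ⟨i', i, τ, Or.inr ⟨hlen.symm, h, hτ, by omega, ?_, ?_, ?_⟩⟩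
    · intro j hj
      have e1 := g j
      have e2 := g' j
      rw [if_pos (by omega)] at e1 e2
      rw [← e1, e2]
    · intro j h1 h2
      have e1 := g j
      have e2 := g' j
      rw [if_pos (by omega)] at e1
      rw [if_neg (by omega)] at e2
      rw [← e1, e2]
    · intro j hj
      exact (post j hj (by omega)).symm

/-! ### Locating the burst -/

/-- The pattern `0^t 1^t` occurs in `x` at position `j`. -/
def Occ (t : ℕ) (x : List ℕ) (j : ℕ) : Prop := (x.drop j).take (2 * t) = pat t

instance (t : ℕ) (x : List ℕ) : DecidablePred (Occ t x) := fun _ => decEq _ _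

theorem occ_iff (t : ℕ) (x : List ℕ) (j : ℕ) :
    Occ t x j ↔ ∀ k < 2 * t, x[j + k]? = some (if k < t then 0 else 1) := by
  have hp : ∀ k, (pat t)[k]? = if k < 2 * t then some (if k < t then 0 else 1) else none := by
    intro k
    simp only [pat, List.getElem?_append, List.getElem?_replicate, List.length_replicate]
    split_ifs <;> first | rfl | omega
  constructor
  · intro h k hk
    have := hp k
    rw [← h, List.getElem?_take_of_lt hk, List.getElem?_drop, if_pos hk] at this
    exact this
  · intro h
    apply List.ext_getElem?
    intro k
    rw [hp, List.getElem?_take, List.getElem?_drop]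
    split_ifs with h1 h2
    · rw [h k h1, if_pos h2]
    · rw [h k h1, if_neg h2]
    · rfl

/-- Two distinct occurrences of `0^t 1^t` do not overlap. -/
theorem occ_spaced (t : ℕ) (x : List ℕ) (j k : ℕ) (hj : Occ t x j) (hk : Occ t x k)
    (hjk : j < k) : j + 2 * t ≤ k := by
  rw [occ_iff] at hj hk
  by_contra hlt
  by_cases hc : k ≤ j + t
  · have h1 := hj (k - j + t - 1) (by omega)
    have h2 := hk (t - 1) (by omega)
    rw [show j + (k - j + t - 1) = k + (t - 1) by omega, h2, if_pos (by omega),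
      if_neg (by omega)] at h1
    simp at h1
  · have h1 := hj (k - j) (by omega)
    have h2 := hk 0 (by omega)
    rw [show j + (k - j) = k + 0 by omega, h2, if_pos (by omega), if_neg (by omega)] at h1
    simp at h1

/-- The number of occurrences of the pattern in `x`. -/
def cnt (t : ℕ) (x : List ℕ) : ℤ :=
  ∑ j ∈ Finset.range x.length, if Occ t x j then (1 : ℤ) else 0

/-- The sum of the positions of the occurrences of the pattern in `x`. -/
def mom (t : ℕ) (x : List ℕ) : ℤ :=
  ∑ j ∈ Finset.range x.length, (j : ℤ) * if Occ t x j then (1 : ℤ) else 0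

/-- The position sums of the two strings of a shift differ by `τ m - d L + E`, where `L` is the
length of the shifted part, `m` the number of occurrences in it, `d` the number of occurrences
that move across it, and `E` an error. This is not divisible by `40 t² (n + 1)` when `L` and `m`
are large: it is too small in absolute value to be a nonzero multiple, and it is positive for
`d ≤ 0`, whereas for `d ≥ 1` the term `d L` dominates since `τ m ≤ L / 2`. -/
theorem moment_ne (d m L E t τ n : ℤ) (ht : 1 ≤ t) (hτ : 1 ≤ τ) (hτt : τ ≤ t) (hL0 : 0 ≤ L)
    (hLn : L ≤ n) (hd1 : -(3 * t) ≤ d) (hd2 : d ≤ 3 * t) (hE : |E| ≤ 36 * t * t)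
    (up : 2 * t * m ≤ L) (low : 36 * t * t + 1 ≤ m) (h2 : (36 * t * t + 1) * 2 ≤ L)
    (hm : 40 * t * t * (n + 1) ∣ τ * m - d * L + E) : False := by
  have ht2 : t ≤ t * t := le_mul_of_one_le_left (by linarith) ht
  have hm0 : 0 ≤ m := by linarith
  have hτm : τ * m ≤ t * m := mul_le_mul_of_nonneg_right hτt hm0
  have hτm' : m ≤ τ * m := le_mul_of_one_le_left hm0 hτ
  have hdL : |d * L| ≤ 3 * t * n := by
    rw [abs_mul]
    have h1 : |d| ≤ 3 * t := abs_le.mpr ⟨hd1, hd2⟩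
    have h2 : |L| ≤ n := by rwa [abs_of_nonneg hL0]
    gcongr
  rw [abs_le] at hE hdL
  have hn0 : 0 ≤ n := hL0.trans hLn
  have htn : t * n ≤ t * t * n := mul_le_mul_of_nonneg_right ht2 hn0
  have htn' : n ≤ t * n := le_mul_of_one_le_left hn0 ht
  have z2 := Int.eq_zero_of_abs_lt_dvd hm (by
    have e : 40 * t * t * (n + 1) = 40 * (t * t * n) + 40 * (t * t) := by ring
    rw [e, abs_lt]
    constructor <;> linarith)
  rcases le_or_gt d 0 with h | h
  · have : d * L ≤ 0 := mul_nonpos_of_nonpos_of_nonneg h hL0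
    linarith
  · have h1 : L ≤ d * L := le_mul_of_one_le_left hL0 h
    linarith

/-- For dense strings, the pattern count modulo `6t + 1` and the sum of pattern positions modulo
`40 t² (n + 1)` force the shifted part `M` to have length `O(δ)`. -/
theorem shift_short {t δ i i' τ n : ℕ} {x x' : List ℕ} (ht : 1 ≤ t) (hδ : 2 ≤ δ)
    (hδt : 2 * t ≤ δ)
    (hx : x.length = n) (hs : Shift t i i' τ x x') (hτ : 1 ≤ τ) (hd : pdense t δ x')
    (hc : (cnt t x : ZMod (6 * t + 1)) = cnt t x')
    (hm : (mom t x : ZMod (40 * t * t * (n + 1))) = mom t x') :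
    i' < i + (36 * t * t + 1) * δ := by
  by_contra hlong
  rw [not_lt] at hlong
  have hx' : x'.length = n := hs.len ▸ hx
  have hbd := hs.bound
  have hτt := hs.le_t
  have h36 : 1 * δ ≤ (36 * t * t + 1) * δ := Nat.mul_le_mul_right _ (by omega)
  have hw : ∀ (z : List ℕ) (j : ℕ), 0 ≤ (if Occ t z j then (1 : ℤ) else 0) ∧
      (if Occ t z j then (1 : ℤ) else 0) ≤ 1 := by
    intro z j; split_ifs <;> simp
  have ind : ∀ j k, (∀ r < 2 * t, x[j + r]? = x'[k + r]?) →
      (if Occ t x j then (1 : ℤ) else 0) = if Occ t x' k then (1 : ℤ) else 0 := by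
    intro j k h
    have : Occ t x j ↔ Occ t x' k := by
      rw [occ_iff, occ_iff]
      exact forall₂_congr fun r hr => by rw [h r hr]
    simp only [this]
  obtain ⟨A, A', B, B', E, hA, hA', hB, hB', hE, eK, eF⟩ :=
    moment_diff (fun j => if Occ t x j then (1 : ℤ) else 0)
      (fun j => if Occ t x' j then (1 : ℤ) else 0) t τ n i i' (fun j => (hw x j).1)
      (fun j => (hw x j).2) (fun j => (hw x' j).1) (fun j => (hw x' j).2) ht hτt (by omega)
      (by omega) (fun j hj => ind _ _ fun r hr => hs.pre _ (by omega))
      (fun j h1 h2 => ind _ _ fun r hr => by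
        rw [show j + τ + r = j + r + τ by omega]; exact hs.mid _ (by omega) (by omega))
      (fun j hj => ind _ _ fun r hr => hs.post _ (by omega))
  have up := sum_le_of_spaced (Occ t x') (2 * t) i i' (occ_spaced t x')
  have low := le_sum_of_dense (Occ t x') (2 * t) δ (36 * t * t + 1) i i' (by omega) hlong
    (fun c h1 h2 => by
      obtain ⟨j, h3, h4, h5⟩ := hd c (by omega)
      exact ⟨j, h3, h4, h5⟩)
  set m : ℤ := ∑ j ∈ Finset.Ico i (i' + 1 - 2 * t), if Occ t x' j then (1 : ℤ) else 0
  have eK : cnt t x - cnt t x' = A + B - A' - B' := by rw [cnt, cnt, hx, hx']; exact eK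
  have eF : mom t x - mom t x' = τ * m + (A - A') * i + (B - B') * i' + E := by
    rw [mom, mom, hx, hx']; exact eF
  rw [eq_comm, ZMod.intCast_eq_intCast_iff_dvd_sub, eK] at hc
  rw [eq_comm, ZMod.intCast_eq_intCast_iff_dvd_sub, eF] at hm
  -- the counts differ by less than the modulus, so they are equal
  have z1 := Int.eq_zero_of_abs_lt_dvd hc (by rw [abs_lt]; push_cast; constructor <;> linarith)
  obtain ⟨L, hL⟩ := Nat.exists_eq_add_of_le hs.le
  subst hL
  have hBB : B - B' = -(A - A') := by linarith
  set d := A - A' with hdd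
  rw [hBB] at hm
  have hform : (τ : ℤ) * m + d * i + -d * ((i + L : ℕ) : ℤ) + E = τ * m - d * L + E := by
    push_cast; ring
  rw [hform] at hm
  have hd1 : -(3 * t : ℤ) ≤ d := by linarith
  have hd2 : d ≤ 3 * t := by linarith
  have h2 : (36 * t * t + 1) * 2 ≤ L := (Nat.mul_le_mul_left _ hδ).trans (by omega)
  rw [add_tsub_cancel_left] at up
  push_cast at up low hm
  exact moment_ne d m L E t τ n (by exact_mod_cast ht) (by exact_mod_cast hτ)
    (by exact_mod_cast hτt) (by positivity) (by omega) hd1 hd2 hE up low (by exact_mod_cast h2) hm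

/-! ### Hashing short strings -/

/-- The finite set of strings over `Σ_q` of length at most `m`. -/
noncomputable def strs (q m : ℕ) : Finset (List ℕ) :=
  ((List.finite_length_le (Fin q) m).image (List.map Fin.val)).toFinset

theorem mem_strs {q m : ℕ} {l : List ℕ} (h : l.length ≤ m) (hq : ∀ a ∈ l, a < q) :
    l ∈ strs q m := by
  rw [strs, Set.Finite.mem_toFinset]
  refine ⟨l.attach.map fun a => ⟨a.1, hq _ a.2⟩, by simpa using h, ?_⟩
  simp [List.map_map, Function.comp_def]

/-- Greedy colouring: a relation on a finite set whose degrees, counted in both directions, are at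
most `D` has a proper colouring with `D + 1` colours. -/
theorem exists_coloring {α : Type*} [DecidableEq α] (R : α → α → Prop) (V : Finset α) (D : ℕ)
    (hdeg : ∀ v ∈ V, ∃ S : Finset α, S.card ≤ D ∧ ∀ u ∈ V, (R u v ∨ R v u) → u ∈ S) :
    ∃ h : α → ℕ, (∀ v, h v < D + 1) ∧
      ∀ u ∈ V, ∀ v ∈ V, R u v → h u = h v → u = v := by
  suffices H : ∀ W : Finset α, W ⊆ V → ∃ h : α → ℕ, (∀ v, h v < D + 1) ∧
      ∀ u ∈ W, ∀ v ∈ W, R u v → h u = h v → u = v from H V subset_rfl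
  intro W
  induction W using Finset.induction_on with
  | empty => exact fun _ => ⟨fun _ => 0, fun _ => Nat.succ_pos _, by simp⟩
  | insert w W hw ih =>
    intro hWV
    obtain ⟨h, hb, hp⟩ := ih ((Finset.subset_insert _ _).trans hWV)
    obtain ⟨S, hS, hSR⟩ := hdeg w (hWV (Finset.mem_insert_self _ _))
    obtain ⟨c, hc, hcS⟩ : ∃ c ∈ Finset.range (D + 1), c ∉ S.image h := by
      apply Finset.exists_mem_notMem_of_card_lt_card
      rw [Finset.card_range]
      exact Nat.lt_succ_of_le (Finset.card_image_le.trans hS)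
    rw [Finset.mem_range] at hc
    have hfresh : ∀ u ∈ W, (R u w ∨ R w u) → h u ≠ c := fun u hu hR e =>
      hcS (Finset.mem_image.mpr ⟨u, hSR u (hWV (Finset.mem_insert_of_mem hu)) hR, e⟩)
    have hne : ∀ u ∈ W, u ≠ w := fun u hu e => hw (e ▸ hu)
    refine ⟨Function.update h w c, ?_, ?_⟩
    · intro v
      by_cases e : v = w
      · subst e; simpa using hc
      · simpa [Function.update_of_ne e] using hb v
    · intro u hu v hv hR e
      rw [Finset.mem_insert] at hu hv
      rcases hu with rfl | hu <;> rcases hv with rfl | hv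
      · rfl
      · rw [Function.update_self, Function.update_of_ne (hne v hv)] at e
        exact absurd e.symm (hfresh v hv (Or.inr hR))
      · rw [Function.update_self, Function.update_of_ne (hne u hu)] at e
        exact absurd e (hfresh u hu (Or.inl hR))
      · rw [Function.update_of_ne (hne u hu), Function.update_of_ne (hne v hv)] at e
        exact hp u hu v hv hR e

/-- A bound on the number of strings that form a shift with a given string of length at most `ℓ`:
two directions, two positions in `[0, ℓ]`, a burst length in `[0, t]` and an inserted word. -/
noncomputable def deg (q t ℓ : ℕ) : ℕ :=
  2 * ((ℓ + 1) * ((ℓ + 1) * ((t + 1) * (strs q t).card)))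

/-- A hash with `O(ℓ²)` values (for fixed `q`, `t`) that tells apart any two strings of length at
most `ℓ` forming a shift. -/
theorem exists_hash (q t ℓ : ℕ) : ∃ h : List ℕ → ℕ, (∀ z, h z < deg q t ℓ + 1) ∧
    ∀ z z' : List ℕ, z.length ≤ ℓ → (∀ a ∈ z, a < q) → (∀ a ∈ z', a < q) →
      (∃ i i' τ, Shift t i i' τ z z') → h z = h z' → z = z' := by
  classical
  let V := (strs q ℓ).filter fun z => z.length ≤ ℓ ∧ ∀ a ∈ z, a < q
  have hV : ∀ z : List ℕ, z ∈ V ↔ z.length ≤ ℓ ∧ ∀ a ∈ z, a < q := fun z => by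
    simp only [V, Finset.mem_filter, and_iff_right_iff_imp]
    exact fun h => mem_strs h.1 h.2
  have hdeg : ∀ v ∈ V, ∃ S : Finset (List ℕ), S.card ≤ deg q t ℓ ∧ ∀ u ∈ V,
      ((∃ i i' τ, Shift t i i' τ u v) ∨ ∃ i i' τ, Shift t i i' τ v u) → u ∈ S := by
    intro v hv
    refine ⟨V.filter fun u => (∃ i i' τ, Shift t i i' τ u v) ∨ ∃ i i' τ, Shift t i i' τ v u,
      ?_, fun u hu hR => Finset.mem_filter.mpr ⟨hu, hR⟩⟩
    -- a neighbour is determined by the direction, the positions, the length and the inserted word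
    have key : ∀ u : List ℕ, ∃ p : Bool × ℕ × ℕ × ℕ × List ℕ,
        ((∃ i i' τ, Shift t i i' τ u v) ∨ ∃ i i' τ, Shift t i i' τ v u) →
        (p.1 = true ∧ Shift t p.2.1 p.2.2.1 p.2.2.2.1 u v ∧ p.2.2.2.2 = (u.drop p.2.1).take t) ∨
        (p.1 = false ∧ Shift t p.2.1 p.2.2.1 p.2.2.2.1 v u ∧
          p.2.2.2.2 = (u.drop p.2.2.1).take t) := by
      intro u
      by_cases h1 : ∃ i i' τ, Shift t i i' τ u v
      · obtain ⟨i, i', τ, hs⟩ := h1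
        exact ⟨(true, i, i', τ, (u.drop i).take t), fun _ => Or.inl ⟨rfl, hs, rfl⟩⟩
      by_cases h2 : ∃ i i' τ, Shift t i i' τ v u
      · obtain ⟨i, i', τ, hs⟩ := h2
        exact ⟨(false, i, i', τ, (u.drop i').take t), fun _ => Or.inr ⟨rfl, hs, rfl⟩⟩
      · exact ⟨default, fun h => absurd h (not_or.mpr ⟨h1, h2⟩)⟩
    choose p hp using key
    have hcard : (Finset.univ (α := Bool) ×ˢ Finset.range (ℓ + 1) ×ˢ Finset.range (ℓ + 1) ×ˢ
        Finset.range (t + 1) ×ˢ strs q t).card = deg q t ℓ := by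
      simp [deg, Finset.card_product]
    rw [← hcard]
    refine Finset.card_le_card_of_injOn p ?_ ?_
    · intro u hu
      rw [Finset.mem_coe, Finset.mem_filter, hV] at hu
      have hsub : ∀ k, (u.drop k).take t ∈ strs q t := fun k =>
        mem_strs (List.length_take_le _ _)
          fun a ha => hu.1.2 a (List.mem_of_mem_drop (List.mem_of_mem_take ha))
      simp only [Finset.coe_product, Set.mem_prod, Finset.mem_coe, Finset.mem_range,
        Finset.mem_univ, true_and]
      rcases hp u hu.2 with ⟨-, hs, e⟩ | ⟨-, hs, e⟩
      · have := hs.le; have := hs.le_t; have := hs.bound; have := hs.len; have := hu.1.1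
        rw [e]
        exact ⟨by omega, by omega, by omega, hsub _⟩
      · have := hs.le; have := hs.le_t; have := hs.bound; have := hs.len; have := hu.1.1
        rw [e]
        exact ⟨by omega, by omega, by omega, hsub _⟩
    · intro u hu u' hu' e
      rw [Finset.mem_coe, Finset.mem_filter] at hu hu'
      have win : ∀ (k τ j : ℕ), τ ≤ t → (u.drop k).take t = (u'.drop k).take t →
          k ≤ j → j < k + τ → u[j]? = u'[j]? := by
        intro k τ j h1 h2 h3 h4
        have := congrArg (fun l => l[j - k]?) h2
        simpa [List.getElem?_take_of_lt (show j - k < t by omega), List.getElem?_drop,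
          show k + (j - k) = j by omega] using this
      apply List.ext_getElem?
      intro j
      rcases hp u hu.2 with ⟨b, hs, ew⟩ | ⟨b, hs, ew⟩ <;>
        rcases hp u' hu'.2 with ⟨b', hs', ew'⟩ | ⟨b', hs', ew'⟩ <;>
        rw [← e] at b' hs' ew'
      · rw [ew] at ew'
        by_cases c1 : j < (p u).2.1
        · rw [hs.pre j c1, hs'.pre j c1]
        by_cases c2 : j < (p u).2.1 + (p u).2.2.2.1
        · exact win _ _ j hs.le_t ew' (by omega) c2
        by_cases c3 : j < (p u).2.2.1 + (p u).2.2.2.1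
        · have e1 := hs.mid (j - (p u).2.2.2.1) (by omega) (by omega)
          have e2 := hs'.mid (j - (p u).2.2.2.1) (by omega) (by omega)
          rw [show j - (p u).2.2.2.1 + (p u).2.2.2.1 = j by omega] at e1 e2
          rw [e1, e2]
        · rw [hs.post j (by omega), hs'.post j (by omega)]
      · simp [b] at b'
      · simp [b] at b'
      · rw [ew] at ew'
        by_cases c1 : j < (p u).2.1
        · rw [← hs.pre j c1, hs'.pre j c1]
        by_cases c2 : j < (p u).2.2.1
        · rw [← hs.mid j (by omega) c2, hs'.mid j (by omega) c2]
        by_cases c3 : j < (p u).2.2.1 + (p u).2.2.2.1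
        · exact win _ _ j hs.le_t ew' (by omega) c3
        · rw [← hs.post j (by omega), hs'.post j (by omega)]
  obtain ⟨h, hb, hp⟩ := exists_coloring (fun z z' => ∃ i i' τ, Shift t i i' τ z z') V
    (deg q t ℓ) hdeg
  refine ⟨h, hb, fun z z' hz hzq hzq' hR e => hp z ((hV z).2 ⟨hz, hzq⟩) z' ((hV z').2 ?_) hR e⟩
  obtain ⟨i, i', τ, hs⟩ := hR
  exact ⟨hs.len ▸ hz, hzq'⟩

/-! ### Block hashes and recovery -/

/-- The block of length `ℓ` of `x` starting at `a`, cut short at the end of `x`. -/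
def blk (ℓ a : ℕ) (x : List ℕ) : List ℕ := (x.drop a).take ℓ

theorem blk_getElem? (ℓ a j : ℕ) (x : List ℕ) :
    (blk ℓ a x)[j]? = if j < ℓ then x[a + j]? else none := by
  rw [blk, List.getElem?_take, List.getElem?_drop]

/-- Sum of the hashes of the consecutive blocks of length `ℓ` of `x`, the first one starting at `o`.
For `ℓ ≥ 1` the range of summation covers all nonempty blocks. -/
def hashSum (h : List ℕ → ℕ) (ℓ o : ℕ) (x : List ℕ) : ℕ :=
  ∑ k ∈ Finset.range (x.length + 1), h (blk ℓ (o + ℓ * k) x)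

/-- If all changes of a shift lie in one block, the hash sum determines the hash of that block,
hence the block. -/
theorem eq_of_hashSum {q t ℓ o k H i i' τ : ℕ} {h : List ℕ → ℕ} {x x' : List ℕ}
    (hb : ∀ z, h z < H)
    (hh : ∀ z z' : List ℕ, z.length ≤ ℓ → (∀ a ∈ z, a < q) → (∀ a ∈ z', a < q) →
      (∃ i i' τ, Shift t i i' τ z z') → h z = h z' → z = z')
    (hx : ∀ a ∈ x, a < q) (hx' : ∀ a ∈ x', a < q)
    (hs : Shift t i i' τ x x') (hℓ : 1 ≤ ℓ) (h1 : o + ℓ * k ≤ i) (h2 : i' + τ ≤ o + ℓ * k + ℓ)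
    (he : (hashSum h ℓ o x : ZMod H) = hashSum h ℓ o x') : x = x' := by
  have hbd := hs.bound
  have hle := hs.le
  have hkl : k ≤ ℓ * k := Nat.le_mul_of_pos_left _ hℓ
  have out : ∀ j, j < i ∨ i' + τ ≤ j → x[j]? = x'[j]? := fun j hj =>
    hj.elim (hs.pre j) (hs.post j)
  have other : ∀ m, m ≠ k → blk ℓ (o + ℓ * m) x = blk ℓ (o + ℓ * m) x' := by
    intro m hm
    apply List.ext_getElem?
    intro j
    rw [blk_getElem?, blk_getElem?]
    split_ifs with hj
    · apply out
      rcases lt_or_gt_of_ne hm with hmk | hmk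
      · have : ℓ * (m + 1) ≤ ℓ * k := Nat.mul_le_mul_left _ hmk
        rw [mul_add] at this
        left; omega
      · have : ℓ * (k + 1) ≤ ℓ * m := Nat.mul_le_mul_left _ hmk
        rw [mul_add] at this
        right; omega
    · rfl
  have hk : k ∈ Finset.range (x.length + 1) := Finset.mem_range.mpr (by omega)
  have hash_eq : h (blk ℓ (o + ℓ * k) x) = h (blk ℓ (o + ℓ * k) x') := by
    rw [hashSum, hashSum, ← hs.len, ← Finset.add_sum_erase _ _ hk,
      ← Finset.add_sum_erase _ _ hk,
      Finset.sum_congr rfl fun m hm => by rw [other m (Finset.ne_of_mem_erase hm)]] at he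
    push_cast at he
    have he := add_right_cancel he
    rw [ZMod.natCast_eq_natCast_iff] at he
    exact Nat.ModEq.eq_of_lt_of_lt he (hb _) (hb _)
  have len_blk : ∀ z : List ℕ, (blk ℓ (o + ℓ * k) z).length = min ℓ (z.length - (o + ℓ * k)) :=
    fun z => by simp [blk]
  have blk_eq : blk ℓ (o + ℓ * k) x = blk ℓ (o + ℓ * k) x' := by
    refine hh _ _ (List.length_take_le _ _)
      (fun a ha => hx a (List.mem_of_mem_drop (List.mem_of_mem_take ha)))
      (fun a ha => hx' a (List.mem_of_mem_drop (List.mem_of_mem_take ha)))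
      ⟨i - (o + ℓ * k), i' - (o + ℓ * k), τ, ⟨?_, by omega, hs.le_t, ?_, ?_, ?_, ?_⟩⟩ hash_eq
    · rw [len_blk, len_blk, hs.len]
    · rw [len_blk]; omega
    · intro j hj
      rw [blk_getElem?, blk_getElem?, hs.pre _ (by omega)]
    · intro j hj hj'
      rw [blk_getElem?, blk_getElem?, if_pos (by omega), if_pos (by omega), ← add_assoc]
      exact hs.mid _ (by omega) (by omega)
    · intro j hj
      rw [blk_getElem?, blk_getElem?, hs.post _ (by omega)]
  apply List.ext_getElem?
  intro j
  by_cases hj : j < i ∨ i' + τ ≤ j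
  · exact out j hj
  · have := congrArg (fun l => l[j - (o + ℓ * k)]?) blk_eq
    simp only [blk_getElem?] at this
    rwa [if_pos (by omega), if_pos (by omega), show o + ℓ * k + (j - (o + ℓ * k)) = j by omega]
      at this

/-- The four components of the sketch separate the two strings of a shift. The part that changes
has length at most `B`, so it fits into a block of length `2 B` starting at a multiple of `2 B`, or
into one starting at such a multiple plus `B`. -/
theorem sketch_injective {q t n δ B i i' τ : ℕ} {h : List ℕ → ℕ} {H : ℕ} {x x' : List ℕ}
    (ht : 1 ≤ t) (hδ : 2 * t ≤ δ) (hB : B = (36 * t * t + 1) * δ + t)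
    (hb : ∀ z, h z < H)
    (hh : ∀ z z' : List ℕ, z.length ≤ 2 * B → (∀ a ∈ z, a < q) → (∀ a ∈ z', a < q) →
      (∃ i i' τ, Shift t i i' τ z z') → h z = h z' → z = z')
    (hlen : x.length = n) (hx : ∀ a ∈ x, a < q) (hx' : ∀ a ∈ x', a < q) (hd : pdense t δ x')
    (hs : Shift t i i' τ x x')
    (hc : (cnt t x : ZMod (6 * t + 1)) = cnt t x')
    (hm : (mom t x : ZMod (40 * t * t * (n + 1))) = mom t x')
    (h0 : (hashSum h (2 * B) 0 x : ZMod H) = hashSum h (2 * B) 0 x')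
    (h1 : (hashSum h (2 * B) B x : ZMod H) = hashSum h (2 * B) B x') : x = x' := by
  have hτt := hs.le_t
  rcases Nat.eq_zero_or_pos τ with h | h
  · subst h
    -- nothing is deleted, so the strings agree everywhere
    apply List.ext_getElem?
    intro j
    rcases lt_or_ge j i with c | c
    · exact hs.pre j c
    rcases lt_or_ge j i' with c' | c'
    · exact hs.mid j c c'
    · exact hs.post j c'
  have hshort := shift_short ht (by omega) hδ hlen hs h hd hc hm
  have hdm := Nat.div_add_mod i (2 * B)
  have hlt := Nat.mod_lt i (show 2 * B > 0 by omega)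
  by_cases hr : i % (2 * B) < B
  · exact eq_of_hashSum (k := i / (2 * B)) hb hh hx hx' hs (by omega) (by omega) (by omega) h0
  · exact eq_of_hashSum (k := i / (2 * B)) hb hh hx hx' hs (by omega) (by omega) (by omega) h1

/-! ### Size of the sketch -/

/-- The sketch takes `O(n (log n)⁴)` values. -/
theorem sketch_size (q t : ℕ) (ε : ℝ) (hε : 0 < ε) :
    ∃ n₀ : ℕ, ∀ n ≥ n₀, ∀ B : ℕ,
      B = (36 * t * t + 1) * (2 * t * q ^ (2 * t) * Nat.clog 2 n) + t →
      Real.logb 2 (((6 * t + 1) * (40 * t * t * (n + 1)) *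
        ((deg q t (2 * B) + 1) * (deg q t (2 * B) + 1)) : ℕ) : ℝ) ≤
      Real.logb 2 n + (8 + ε) * Real.logb 2 (Real.logb 2 n) := by
  -- `2 B + 1 ≤ b * clog n`, `deg + 1 ≤ e * (clog n)²` and the whole sketch is `≤ c n (clog n)⁴`
  set b : ℕ := 2 * ((36 * t * t + 1) * (2 * t * q ^ (2 * t)) + t) + 1 with hbdef
  set e : ℕ := 2 * ((b + 1) * ((b + 1) * ((t + 1) * (strs q t).card))) + 1 with hedef
  set c : ℕ := (6 * t + 1) * (40 * t * t * 2) * (e * e) with hcdef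
  have lim : Filter.Tendsto (fun n : ℕ => Real.logb 2 (Real.logb 2 n)) Filter.atTop
      Filter.atTop :=
    (Real.tendsto_logb_atTop one_lt_two).comp
      ((Real.tendsto_logb_atTop one_lt_two).comp tendsto_natCast_atTop_atTop)
  obtain ⟨n₁, hn₁⟩ := Filter.eventually_atTop.mp
    (lim.eventually_ge_atTop (max 0 (Real.logb 2 (c * 16 + 1) / 4)))
  refine ⟨max n₁ 2, fun n hn B hB => ?_⟩
  have hn2 : 2 ≤ n := (le_max_right _ _).trans hn
  have hlim := hn₁ n ((le_max_left _ _).trans hn)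
  have hlim0 := (le_max_left _ _).trans hlim
  have hlim1 := (le_max_right _ _).trans hlim
  set l := Nat.clog 2 n with hl
  have hl1 : 1 ≤ l := Nat.clog_pos one_lt_two hn2
  have hB1 : 2 * B + 1 ≤ b * l := by
    have e1 : b * l = 2 * ((36 * t * t + 1) * (2 * t * q ^ (2 * t) * l)) + 2 * (t * l) + l := by
      rw [hbdef]; ring
    have : t ≤ t * l := Nat.le_mul_of_pos_right _ hl1
    omega
  have hD : deg q t (2 * B) + 1 ≤ e * (l * l) := by
    have e1 : e * (l * l) = 2 * (((b + 1) * l) * (((b + 1) * l) * ((t + 1) * (strs q t).card)))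
        + l * l := by rw [hedef]; ring
    have e2 : 2 * B + 1 ≤ (b + 1) * l := by rw [add_mul]; omega
    have e3 : 1 ≤ l * l := Nat.mul_pos hl1 hl1
    rw [e1, deg]
    gcongr
  have hN : (6 * t + 1) * (40 * t * t * (n + 1)) *
      ((deg q t (2 * B) + 1) * (deg q t (2 * B) + 1)) ≤ c * n * l ^ 4 := by
    have e1 : c * n * l ^ 4 = (6 * t + 1) * (40 * t * t * (2 * n)) *
        ((e * (l * l)) * (e * (l * l))) := by rw [hcdef]; ring
    rw [e1]
    gcongr
    omega
  have hnR : (2 : ℝ) ≤ n := by exact_mod_cast hn2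
  have hlog1 : 1 ≤ Real.logb 2 n := by
    rw [Real.le_logb_iff_rpow_le one_lt_two (by linarith)]; simpa using hnR
  have hlR : (l : ℝ) ≤ 2 * Real.logb 2 n := by
    have h1 : (l : ℝ) ≤ Real.logb 2 n + 1 := by
      have h := Real.natCeil_logb_natCast 2 n
      have h3 := Nat.ceil_lt_add_one (show 0 ≤ Real.logb 2 n by linarith)
      rw [hl, ← h]
      exact_mod_cast h3.le
    linarith
  have hfin : (((6 * t + 1) * (40 * t * t * (n + 1)) *
      ((deg q t (2 * B) + 1) * (deg q t (2 * B) + 1)) : ℕ) : ℝ) ≤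
      ((c : ℝ) * 16 + 1) * (n * Real.logb 2 n ^ 4) := by
    calc _ ≤ ((c * n * l ^ 4 : ℕ) : ℝ) := by exact_mod_cast hN
      _ = c * n * (l : ℝ) ^ 4 := by push_cast; ring
      _ ≤ c * n * (2 * Real.logb 2 n) ^ 4 := by gcongr
      _ = (c * 16) * (n * Real.logb 2 n ^ 4) := by ring
      _ ≤ _ := by gcongr; linarith
  rcases Nat.eq_zero_or_pos ((6 * t + 1) * (40 * t * t * (n + 1)) *
      ((deg q t (2 * B) + 1) * (deg q t (2 * B) + 1))) with h0 | hpos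
  · rw [h0]
    simp only [Nat.cast_zero, Real.logb_zero]
    positivity
  have hposR : (0 : ℝ) < (((6 * t + 1) * (40 * t * t * (n + 1)) *
      ((deg q t (2 * B) + 1) * (deg q t (2 * B) + 1)) : ℕ) : ℝ) := by exact_mod_cast hpos
  have hbound := Real.logb_le_logb_of_le one_lt_two hposR hfin
  have hlp : 0 < Real.logb 2 n := by linarith
  rw [Real.logb_mul (by positivity) (by positivity), Real.logb_mul (by positivity) (by positivity),
    Real.logb_pow] at hbound
  push_cast at hbound ⊢
  nlinarith [mul_nonneg hε.le hlim0]

/-- for fixed `q > 2`, `t ≥ 1`, `ε > 0` and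
`δ = 2t·q^{2t}·⌈log₂ n⌉`, for all large enough `n` there is a sketch
`f : Σ_q^n → {0, …, N−1}` with `log₂ N ≤ log₂ n + (8+ε)·log₂ log₂ n` that
separates any two `(p,δ)`-dense strings whose burst-deletion balls of
radius `≤ t` intersect. -/
theorem exists_sketch_for_dense_strings
    (q t : ℕ) (ε : ℝ) (hq : 2 < q) (ht : 1 ≤ t) (hε : 0 < ε) :
    ∃ n₀ : ℕ, ∀ n ≥ n₀, ∃ N : ℕ, 0 < N ∧
      Real.logb 2 N ≤ Real.logb 2 n + (8 + ε) * Real.logb 2 (Real.logb 2 n) ∧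
      ∃ f : List ℕ → ℕ, (∀ x : List ℕ, f x < N) ∧
        ∀ x x' : List ℕ, x.length = n → x'.length = n →
          (∀ a ∈ x, a < q) → (∀ a ∈ x', a < q) →
          pdense t (2 * t * q ^ (2 * t) * Nat.clog 2 n) x →
          pdense t (2 * t * q ^ (2 * t) * Nat.clog 2 n) x' →
          f x = f x' → (burstLe t x ∩ burstLe t x').Nonempty → x = x' := by
  obtain ⟨n₀, hn₀⟩ := sketch_size q t ε hε
  refine ⟨max n₀ 2, fun n hn => ?_⟩
  have hn2 : 2 ≤ n := (le_max_right _ _).trans hn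
  obtain ⟨B, hB⟩ : ∃ B, B = (36 * t * t + 1) * (2 * t * q ^ (2 * t) * Nat.clog 2 n) + t :=
    ⟨_, rfl⟩
  have hsize := hn₀ n ((le_max_left _ _).trans hn) B hB
  have hδ : 2 * t ≤ 2 * t * q ^ (2 * t) * Nat.clog 2 n := by
    rw [mul_assoc]
    exact Nat.le_mul_of_pos_right _
      (Nat.mul_pos (pow_pos (by omega) _) (Nat.clog_pos one_lt_two hn2))
  obtain ⟨h, hb, hh⟩ := exists_hash q t (2 * B)
  have : NeZero (40 * t * t * (n + 1)) := ⟨by positivity⟩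
  let S := (ZMod (6 * t + 1) × ZMod (40 * t * t * (n + 1))) ×
    (ZMod (deg q t (2 * B) + 1) × ZMod (deg q t (2 * B) + 1))
  have hcard : Fintype.card S = (6 * t + 1) * (40 * t * t * (n + 1)) *
      ((deg q t (2 * B) + 1) * (deg q t (2 * B) + 1)) := by
    simp only [S, Fintype.card_prod, ZMod.card]
  let g : List ℕ → S := fun x =>
    ((cnt t x, mom t x), (hashSum h (2 * B) 0 x, hashSum h (2 * B) B x))
  refine ⟨_, ?_, hsize, fun x => Fintype.equivFinOfCardEq hcard (g x), fun x => Fin.is_lt _, ?_⟩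
  · positivity
  intro x x' hx hx' hxq hxq' hd hd' hf hy
  have hg : g x = g x' := (Fintype.equivFinOfCardEq hcard).injective (Fin.ext hf)
  have hc : (cnt t x : ZMod (6 * t + 1)) = cnt t x' := congrArg (fun s : S => s.1.1) hg
  have hm : (mom t x : ZMod (40 * t * t * (n + 1))) = mom t x' :=
    congrArg (fun s : S => s.1.2) hg
  have h0 : (hashSum h (2 * B) 0 x : ZMod (deg q t (2 * B) + 1)) = hashSum h (2 * B) 0 x' :=
    congrArg (fun s : S => s.2.1) hg
  have h1 : (hashSum h (2 * B) B x : ZMod (deg q t (2 * B) + 1)) = hashSum h (2 * B) B x' :=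
    congrArg (fun s : S => s.2.2) hg
  obtain ⟨i, i', τ, hs | hs⟩ := shift_of_burst (hx.trans hx'.symm) hy
  · exact sketch_injective ht hδ hB hb hh hx hxq hxq' hd' hs hc hm h0 h1
  · exact (sketch_injective ht hδ hB hb hh hx' hxq' hxq hd hs hc.symm hm.symm h0.symm
      h1.symm).symm
end

section
/- Let q ≥ 2, t ≥ 1, n ≥ 1, s ≥ 1, δ = 2t·q^{2t}·⌈log_2 n⌉, and let f : Σ_q^n → Σ_q^s be a function such that for all (p,δ)-dense x, x' ∈ Σ_q^n with f(x) = f(x') and B_{≤t}(x) ∩ B_{≤t}(x') ≠ ∅, one has x = x'. For (p,δ)-dense x ∈ Σ_q^n, define E(x) = x · 0^t · 1 · f(x) ∈ Σ_q^{n+t+1+s} (the concatenation of x, t zeros, a one, and f(x)). Then for all (p,δ)-dense x, x' ∈ Σ_q^n, if B_{≤t}(E(x)) ∩ B_{≤t}(E(x')) ≠ ∅ then x = x'. Consequently, the code C = {E(x) : x ∈ Σ_q^n is (p,δ)-dense} corrects any burst of at most t deletions. -/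
/-- Position-by-position meaning of two bursts of the same length, at `i ≤ i'`, giving the same
string: agreement outside `[i, i' + k)` and a shift by `k` in between. -/
theorem burst_eq_getElem? {E E' : List ℕ} {i i' k : ℕ} (hii : i ≤ i')
    (hi : i + k ≤ E.length) (hi' : i' + k ≤ E'.length)
    (h : E.take i ++ E.drop (i + k) = E'.take i' ++ E'.drop (i' + k)) :
    (∀ j : ℕ, j < i → E[j]? = E'[j]?) ∧
    (∀ j : ℕ, i ≤ j → j < i' → E[j + k]? = E'[j]?) ∧
    (∀ j : ℕ, i' + k ≤ j → E[j]? = E'[j]?) := by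
  have key : ∀ j : ℕ, (E.take i ++ E.drop (i + k))[j]? = (E'.take i' ++ E'.drop (i' + k))[j]? := by
    intro j; rw [h]
  have l1 : (E.take i).length = i := by simp; omega
  have l2 : (E'.take i').length = i' := by simp; omega
  simp only [List.getElem?_append, l1, l2, List.getElem?_take, List.getElem?_drop] at key
  refine ⟨fun j hj => ?_, fun j h1 h2 => ?_, fun j hj => ?_⟩
  · have := key j
    rwa [if_pos hj, if_pos hj, if_pos (by omega), if_pos (by omega)] at this
  · have := key j
    rw [if_neg (by omega), if_pos h2, if_pos h2] at this
    rw [← this]; congr 1; omega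
  · have := key (j - k)
    rw [if_neg (by omega), if_neg (by omega)] at this
    rwa [show i + k + (j - k - i) = j by omega, show i' + k + (j - k - i') = j by omega] at this

/-- The pointwise conclusion of `burst_eq_getElem?` for two strings `x ++ w` and `x' ++ w'` forces the balls of the two length-`n` prefixes to meet. -/
theorem burstLe_prefix_inter {x x' w w' : List ℕ} {n i i' k t : ℕ} (hk : k ≤ t)
    (hx : x.length = n) (hx' : x'.length = n) (hii : i ≤ i')
    (hA : ∀ j, j < i → (x ++ w)[j]? = (x' ++ w')[j]?)
    (hB : ∀ j, i ≤ j → j < i' → (x ++ w)[j + k]? = (x' ++ w')[j]?)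
    (hC : ∀ j, i' + k ≤ j → (x ++ w)[j]? = (x' ++ w')[j]?) :
    (burstLe t x ∩ burstLe t x').Nonempty := by
  have hA' : ∀ j, j < i → j < n → x[j]? = x'[j]? := by
    intro j h1 h2
    have := hA j h1
    rwa [List.getElem?_append_left (by omega), List.getElem?_append_left (by omega)] at this
  have hB' : ∀ j, i ≤ j → j < i' → j + k < n → x[j + k]? = x'[j]? := by
    intro j h1 h2 h3
    have := hB j h1 h2
    rwa [List.getElem?_append_left (by omega), List.getElem?_append_left (by omega)] at this
  have hC' : ∀ j, i' + k ≤ j → j < n → x[j]? = x'[j]? := by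
    intro j h1 h2
    have := hC j h1
    rwa [List.getElem?_append_left (by omega), List.getElem?_append_left (by omega)] at this
  -- If `i' + k > n`, the burst of `x'` is moved to the end of `x'`, and that of `x` is moved left if
  -- it would pass the end of `x`; `k > n` is possible, and then the whole prefix is deleted.
  obtain ⟨r, a, b, hr, hab, han, hbn, e⟩ : ∃ r a b : ℕ, r ≤ t ∧ a ≤ b ∧ a + r ≤ n ∧ b + r ≤ n ∧
      (∀ j, (j < a → x[j]? = x'[j]?) ∧ (a ≤ j → j < b → x[j + r]? = x'[j]?) ∧
        (b + r ≤ j → j < n → x[j]? = x'[j]?)) := by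
    by_cases h : i' + k ≤ n
    · exact ⟨k, i, i', hk, hii, by omega, h, fun j =>
        ⟨fun h1 => hA' j h1 (by omega), fun h1 h2 => hB' j h1 h2 (by omega), hC' j⟩⟩
    · refine ⟨min k n, min i (n - min k n), n - min k n, by omega, by omega, by omega, by omega,
        fun j => ⟨fun h1 => hA' j (by omega) (by omega), fun h1 h2 => ?_, by omega⟩⟩
      have hkn : min k n = k := by omega
      rw [hkn]
      exact hB' j (by omega) (by omega) (by omega)
  refine ⟨x.take a ++ x.drop (a + r), ⟨r, hr, a, by omega, rfl⟩, r, hr, b, by omega, ?_⟩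
  have l1 : (x.take a).length = a := by simp; omega
  have l2 : (x'.take b).length = b := by simp; omega
  apply List.ext_getElem?
  intro j
  simp only [List.getElem?_append, l1, l2, List.getElem?_take, List.getElem?_drop]
  by_cases h1 : j < a
  · rw [if_pos h1, if_pos h1, if_pos (by omega), if_pos (by omega)]
    exact (e j).1 h1
  · rw [if_neg h1, show a + r + (j - a) = j + r by omega]
    by_cases h2 : j < b
    · rw [if_pos h2, if_pos h2]
      exact (e j).2.1 (by omega) h2
    · rw [if_neg h2, show b + r + (j - b) = j + r by omega]
      by_cases h3 : j + r < n
      · exact (e (j + r)).2.2 (by omega) h3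
      · rw [List.getElem?_eq_none (by omega), List.getElem?_eq_none (by omega)]

/-- The marker `0^t 1` prevents a burst of length at most `t` from altering both the prefix and
the suffix. -/
theorem prefix_eq_or_suffix_eq {x x' u u' : List ℕ} {n i i' k t : ℕ} (hk : k ≤ t)
    (hx : x.length = n) (hx' : x'.length = n)
    (hA : ∀ j, j < i → (x ++ (List.replicate t 0 ++ 1 :: u))[j]? =
      (x' ++ (List.replicate t 0 ++ 1 :: u'))[j]?)
    (hB : ∀ j, i ≤ j → j < i' → (x ++ (List.replicate t 0 ++ 1 :: u))[j + k]? =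
      (x' ++ (List.replicate t 0 ++ 1 :: u'))[j]?)
    (hC : ∀ j, i' + k ≤ j → (x ++ (List.replicate t 0 ++ 1 :: u))[j]? =
      (x' ++ (List.replicate t 0 ++ 1 :: u'))[j]?) :
    x = x' ∨ u = u' := by
  -- Agreement of the full strings from position `n + t + 1` on is agreement of the suffixes.
  have suffix_eq : (∀ j, n + t + 1 ≤ j → (x ++ (List.replicate t 0 ++ 1 :: u))[j]? =
      (x' ++ (List.replicate t 0 ++ 1 :: u'))[j]?) → u = u' := by
    intro H
    apply List.ext_getElem?
    intro j
    have := H (n + t + 1 + j) (by omega)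
    rw [List.getElem?_append_right (by omega),
      List.getElem?_append_right (by rw [List.length_replicate]; omega),
      List.getElem?_append_right (by omega),
      List.getElem?_append_right (by rw [List.length_replicate]; omega),
      List.length_replicate, hx, hx', show n + t + 1 + j - n - t = j + 1 by omega] at this
    simpa using this
  by_cases h1 : n ≤ i
  · left
    apply List.ext_getElem?
    intro j
    by_cases hj : j < n
    · have := hA j (by omega)
      rwa [List.getElem?_append_left (by omega), List.getElem?_append_left (by omega)] at this
    · rw [List.getElem?_eq_none (by omega), List.getElem?_eq_none (by omega)]
  right
  by_cases h2 : i' + k ≤ n + t + 1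
  · exact suffix_eq fun j hj => hC j (by omega)
  rcases Nat.eq_zero_or_pos k with rfl | hk0
  · refine suffix_eq fun j hj => ?_
    by_cases h3 : j < i'
    · exact hB j (by omega) h3
    · exact hC j (by omega)
  -- The `1` of the first marker meets a `0` of the second one.
  exfalso
  have := hB (n + t - k) (by omega) (by omega)
  rw [show n + t - k + k = n + t by omega, List.getElem?_append_right (by omega),
    List.getElem?_append_right (by simp; omega), List.getElem?_append_right (by omega),
    List.getElem?_append_left (by simp; omega), List.getElem?_replicate, if_pos (by omega)] at this
  simp [hx] at this

/-- For two bursts of the same length at `i ≤ i'` with equal results, the prefixes agree, or the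
suffixes agree and the prefixes have meeting balls. -/
theorem marker_dichotomy {x x' u u' : List ℕ} {n i i' k t : ℕ} (hk : k ≤ t)
    (hx : x.length = n) (hx' : x'.length = n) (hii : i ≤ i')
    (hi : i + k ≤ (x ++ (List.replicate t 0 ++ 1 :: u)).length)
    (hi' : i' + k ≤ (x' ++ (List.replicate t 0 ++ 1 :: u')).length)
    (h : (x ++ (List.replicate t 0 ++ 1 :: u)).take i ++
        (x ++ (List.replicate t 0 ++ 1 :: u)).drop (i + k) =
      (x' ++ (List.replicate t 0 ++ 1 :: u')).take i' ++
        (x' ++ (List.replicate t 0 ++ 1 :: u')).drop (i' + k)) :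
    x = x' ∨ (u = u' ∧ (burstLe t x ∩ burstLe t x').Nonempty) := by
  obtain ⟨hA, hB, hC⟩ := burst_eq_getElem? hii hi hi' h
  rcases prefix_eq_or_suffix_eq hk hx hx' hA hB hC with h | h
  · exact Or.inl h
  · exact Or.inr ⟨h, burstLe_prefix_inter hk hx hx' hii hA hB hC⟩

/-- Theorem 2: suppose `f : Σ_q^n → Σ_q^s` is a sketch that
separates `(p,δ)`-dense strings with intersecting `B_{≤t}` balls, where
`δ = 2t·q^{2t}·⌈log₂ n⌉`.  Then the encoding
`E(x) = x · 0^t · 1 · f(x) ∈ Σ_q^{n+t+1+s}` yields a code on the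
`(p,δ)`-dense strings that corrects any burst of at most `t` deletions:
if `B_{≤t}(E(x)) ∩ B_{≤t}(E(x')) ≠ ∅` then `x = x'`. -/
theorem marker_encoding_corrects_burst
    (q t n s : ℕ) (hq : 2 ≤ q) (ht : 1 ≤ t) (hn : 1 ≤ n) (hs : 1 ≤ s)
    (δ : ℕ) (hδ : δ = 2 * t * q ^ (2 * t) * Nat.clog 2 n)
    (f : List ℕ → List ℕ)
    (hflen : ∀ x : List ℕ, (f x).length = s)
    (hfal : ∀ x : List ℕ, ∀ a ∈ f x, a < q)
    (hfsep : ∀ x x' : List ℕ, x.length = n → x'.length = n →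
      (∀ a ∈ x, a < q) → (∀ a ∈ x', a < q) →
      pdense t δ x → pdense t δ x' → f x = f x' →
      (burstLe t x ∩ burstLe t x').Nonempty → x = x') :
    ∀ x x' : List ℕ, x.length = n → x'.length = n →
      (∀ a ∈ x, a < q) → (∀ a ∈ x', a < q) →
      pdense t δ x → pdense t δ x' →
      (burstLe t (x ++ List.replicate t 0 ++ [1] ++ f x) ∩
        burstLe t (x' ++ List.replicate t 0 ++ [1] ++ f x')).Nonempty →
      x = x' := by
  intro x x' hx hx' hxq hxq' hd hd' hne
  simp only [List.append_assoc, List.singleton_append] at hne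
  obtain ⟨y, ⟨k, hk, i, hi, hy⟩, k', hk', i', hi', hy'⟩ := hne
  -- The two bursts have equal length because the two codewords do.
  have hkk : k = k' := by
    have e := congrArg List.length (hy.symm.trans hy')
    simp only [List.length_append, List.length_take, List.length_drop, List.length_replicate,
      List.length_cons, hflen, hx, hx'] at e hi hi'
    omega
  subst hkk
  rcases le_total i i' with hii | hii
  · rcases marker_dichotomy hk hx hx' hii hi hi' (hy.symm.trans hy') with h | ⟨h1, h2⟩
    · exact h
    · exact hfsep x x' hx hx' hxq hxq' hd hd' h1 h2
  · rcases marker_dichotomy hk hx' hx hii hi' hi (hy'.symm.trans hy) with h | ⟨h1, h2⟩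
    · exact h.symm
    · exact (hfsep x' x hx' hx hxq' hxq hd' hd h1 h2).symm
end
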